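/- arXiv:2211.10895 — 7 statements merged into one kernel-verified Lean document; each statement's English description precedes it below -/
import Mathlib

section
/- There exists a finite simple bipartite graph G without isolated vertices, on n = 14 vertices and with chromatic number χ(G) = 2, such that f_o(G) < n/χ(G); namely the bipartite complement of the Heawood graph, which satisfies f_o(G) = 6 < 7. -/
/-!
Identify the points and the lines of the Fano plane with the nonzero vectors of `𝔽₂³`, so that a
point `x` lies on a line `y` iff `x ⬝ᵥ y = 0`; in the bipartite complement of the Heawood graph, `x`
and `y` are then adjacent iff `x ⬝ᵥ y = 1`. Let the points `A` and the lines `B` induce an odd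
subgraph, and let `a` and `b` be their sums. Oddness says that `x ⬝ᵥ b = 1` for all `x ∈ A` and
`a ⬝ᵥ y = 1` for all `y ∈ B`, so if `A` is nonempty it lies in the affine plane
`{x | x ⬝ᵥ b = 1}`, which has four elements, and these sum to zero. Were `A` the whole plane, then
`a = 0`, so `B = ∅`, so `b = 0`, contradicting `A ≠ ∅`. Thus `|A| ≤ 3`, and likewise `|B| ≤ 3`.
The argument applies whenever adjacency is given by an `𝔽₂`-bilinear form `Φ` in distinct vectors of
spaces of dimension at least three.
The bound six is attained by the unit vectors on both sides, which induce a perfect matching.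
-/

open scoped Classical

/-- `fo G` is the maximum number of vertices of an odd induced subgraph of `G`,
i.e. an induced subgraph in which every vertex has odd degree. -/
noncomputable def fo {V : Type*} [Fintype V] (G : SimpleGraph V) : ℕ :=
  sSup {n | ∃ s : Finset V,
    (∀ v ∈ s, Odd ((s.filter (fun u => G.Adj v u)).card)) ∧ s.card = n}

open Finset Module

lemma odd_card_filter_iff_sum_eq_one {α : Type*} {s : Finset α} {P : α → Prop}
    {c : α → ZMod 2} (hc : ∀ a, P a ↔ c a = 1) : Odd #{a ∈ s | P a} ↔ ∑ a ∈ s, c a = 1 := by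
  have hite (a : α) : c a = if P a then 1 else 0 := by
    split_ifs with h
    · exact (hc a).1 h
    · exact not_ne_iff.1 fun h0 ↦ h ((hc a).2 (Fin.eq_one_of_ne_zero (c a) h0))
  rw [← ZMod.natCast_eq_one_iff_odd, natCast_card_filter, sum_congr rfl fun a _ ↦ hite a]

section AffineHyperplane

variable {V : Type*} [AddCommGroup V] [Module (ZMod 2) V] [Fintype V]

lemma two_mul_card_apply_eq_one {f : V →ₗ[ZMod 2] ZMod 2} (hf : f ≠ 0) :
    2 * #{x | f x = 1} = Fintype.card V := by
  have hrange (c : ZMod 2) : c ∈ Set.range f := LinearMap.surjective hf c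
  have hfiber : #{x | f x = 0} = #{x | f x = 1} :=
    AddMonoidHom.card_fiber_eq_of_mem_range f (hrange 0) (hrange 1)
  calc 2 * #{x | f x = 1} = #{x | f x = 0} + #{x | f x = 1} := by rw [hfiber, two_mul]
    _ = ∑ c : ZMod 2, #{x | f x = c} := (Fin.sum_univ_two fun c : ZMod 2 ↦ #{x | f x = c}).symm
    _ = Fintype.card V := (card_eq_sum_card_fiberwise fun _ _ ↦ mem_coe.2 (mem_univ _)).symm

lemma sum_filter_apply_eq_one_eq_zero (hV : 3 ≤ finrank (ZMod 2) V) (f : V →ₗ[ZMod 2] ZMod 2) :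
    ∑ x with f x = 1, x = 0 := by
  refine (forall_dual_apply_eq_zero_iff (ZMod 2) _).1 fun g ↦ ?_
  obtain ⟨z, hz, hz0⟩ : ∃ z ∈ (f.prod g).ker, z ≠ 0 :=
    Submodule.exists_mem_ne_zero_of_ne_bot <| LinearMap.ker_ne_bot_of_finrank_lt <| by
      rw [finrank_prod, finrank_self]; lia
  obtain ⟨hfz, hgz⟩ : f z = 0 ∧ g z = 0 := by simpa using hz
  rw [map_sum]
  -- Translation by `z` preserves `f` and `g` and has no fixed points, so the terms cancel in pairs.
  refine sum_involution (fun x _ ↦ x + z) (fun x _ ↦ ?_) (fun x _ _ ↦ by simpa using hz0)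
    (fun x hx ↦ ?_) (fun x _ ↦ ?_)
  · rw [map_add, hgz, add_zero, CharTwo.add_self_eq_zero]
  · simpa [hfz] using hx
  · rw [add_assoc, ZModModule.add_self, add_zero]

lemma two_mul_card_add_one_le_of_apply_eq_one (hV : 3 ≤ finrank (ZMod 2) V)
    {f : V →ₗ[ZMod 2] ZMod 2} {A : Finset V} (hA : ∀ x ∈ A, f x = 1)
    (hsum : ∑ x ∈ A, x = 0 → f = 0) : 2 * (#A + 1) ≤ Fintype.card V := by
  by_cases hf : f = 0
  · have hAempty : A = ∅ := eq_empty_of_forall_notMem fun x hx ↦ by simpa [hf] using hA x hx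
    have : Nontrivial V := nontrivial_of_finrank_pos (R := ZMod 2) (by lia)
    have hcard : 2 ≤ Fintype.card V := Fintype.one_lt_card
    simpa [hAempty] using hcard
  · have hsub : A ⊆ ({x | f x = 1} : Finset V) := fun x hx ↦ by simpa using hA x hx
    have hne : A ≠ ({x | f x = 1} : Finset V) := by
      rintro rfl
      exact hf (hsum (sum_filter_apply_eq_one_eq_zero hV f))
    have hlt : #A < #{x | f x = 1} := card_lt_card (hsub.ssubset_of_ne hne)
    have hplane : 2 * #{x | f x = 1} = Fintype.card V := two_mul_card_apply_eq_one hf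
    lia

end AffineHyperplane

/-- The vertex set `s` induces an odd subgraph of `G`: one in which every degree is odd. -/
def InducesOdd {V : Type*} (G : SimpleGraph V) (s : Finset V) : Prop :=
  ∀ v ∈ s, Odd #{u ∈ s | G.Adj v u}

section BipartiteGraph

variable {α β : Type*} {r : α → β → Prop}

/-- The bipartite graph on the disjoint union `α ⊕ β` whose edges are the pairs related by `r`. -/
def bipartiteGraph (r : α → β → Prop) : SimpleGraph (α ⊕ β) where
  Adj
    | .inl a, .inr b => r a b
    | .inr b, .inl a => r a b
    | _, _ => False
  symm := ⟨by rintro (a | b) (a' | b') h <;> exact h⟩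
  loopless := ⟨by rintro (a | b) h <;> exact h⟩

@[simp] lemma bipartiteGraph_adj_inl_inl {a a' : α} :
    ¬ (bipartiteGraph r).Adj (.inl a) (.inl a') := id

@[simp] lemma bipartiteGraph_adj_inl_inr {a : α} {b : β} :
    (bipartiteGraph r).Adj (.inl a) (.inr b) ↔ r a b := .rfl

@[simp] lemma bipartiteGraph_adj_inr_inl {a : α} {b : β} :
    (bipartiteGraph r).Adj (.inr b) (.inl a) ↔ r a b := .rfl

@[simp] lemma bipartiteGraph_adj_inr_inr {b b' : β} :
    ¬ (bipartiteGraph r).Adj (.inr b) (.inr b') := id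

lemma chromaticNumber_bipartiteGraph (h : ∃ a b, r a b) :
    (bipartiteGraph r).chromaticNumber = 2 := by
  obtain ⟨a, b, hab⟩ := h
  refine SimpleGraph.chromaticNumber_eq_two_iff.2 ⟨?_, ?_⟩
  · refine ⟨.mk (Sum.elim (fun _ ↦ 0) fun _ ↦ 1) ?_⟩
    rintro (_ | _) (_ | _) <;> simp
  · exact SimpleGraph.ne_bot_iff_exists_adj.2 ⟨.inl a, .inr b, hab⟩

lemma inducesOdd_bipartiteGraph_disjSum {A : Finset α} {B : Finset β} :
    InducesOdd (bipartiteGraph r) (A.disjSum B) ↔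
      (∀ a ∈ A, Odd #{b ∈ B | r a b}) ∧ ∀ b ∈ B, Odd #{a ∈ A | r a b} := by
  have hleft (a : α) :
      #{u ∈ A.disjSum B | (bipartiteGraph r).Adj (.inl a) u} = #{b ∈ B | r a b} := by
    simp [card_filter, sum_disjSum, -sum_boole]
  have hright (b : β) :
      #{u ∈ A.disjSum B | (bipartiteGraph r).Adj (.inr b) u} = #{a ∈ A | r a b} := by
    simp [card_filter, sum_disjSum, -sum_boole]
  simp [InducesOdd, hleft, hright]

end BipartiteGraph

section BilinearRepresentation

variable {α β V W : Type*} [AddCommGroup V] [Module (ZMod 2) V] [AddCommGroup W]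
  [Module (ZMod 2) W] {Φ : V →ₗ[ZMod 2] W →ₗ[ZMod 2] ZMod 2} {p : α → V} {q : β → W}

lemma inducesOdd_iff_bilinear_sum_eq_one {r : α → β → Prop}
    (hr : ∀ a b, r a b ↔ Φ (p a) (q b) = 1) {A : Finset α} {B : Finset β} :
    InducesOdd (bipartiteGraph r) (A.disjSum B) ↔
      (∀ a ∈ A, Φ (p a) (∑ b ∈ B, q b) = 1) ∧ ∀ b ∈ B, Φ (∑ a ∈ A, p a) (q b) = 1 := by
  simp only [inducesOdd_bipartiteGraph_disjSum, map_sum, LinearMap.sum_apply,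
    odd_card_filter_iff_sum_eq_one (hr _), odd_card_filter_iff_sum_eq_one fun a ↦ hr a _]

lemma two_mul_card_add_one_le_of_bilinear_sum_eq_one [Fintype V] (hV : 3 ≤ finrank (ZMod 2) V)
    (hp : p.Injective) {A : Finset α} {B : Finset β}
    (hA : ∀ a ∈ A, Φ (p a) (∑ b ∈ B, q b) = 1) (hB : ∀ b ∈ B, Φ (∑ a ∈ A, p a) (q b) = 1) :
    2 * (#A + 1) ≤ Fintype.card V := by
  have hsum : ∑ a ∈ A, p a = 0 → Φ.flip (∑ b ∈ B, q b) = 0 := fun h ↦ by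
    have hBempty : B = ∅ := eq_empty_of_forall_notMem fun b hb ↦ by simpa [h] using hB b hb
    rw [hBempty, sum_empty, map_zero]
  simpa using two_mul_card_add_one_le_of_apply_eq_one hV (A := A.map ⟨p, hp⟩)
    (f := Φ.flip (∑ b ∈ B, q b)) (by simpa using hA) (by simpa using hsum)

theorem InducesOdd.two_mul_card_add_two_le [Fintype V] [Fintype W]
    (hV : 3 ≤ finrank (ZMod 2) V) (hW : 3 ≤ finrank (ZMod 2) W) (hp : p.Injective)
    (hq : q.Injective) {r : α → β → Prop} (hr : ∀ a b, r a b ↔ Φ (p a) (q b) = 1)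
    {s : Finset (α ⊕ β)} (hs : InducesOdd (bipartiteGraph r) s) :
    2 * (#s + 2) ≤ Fintype.card V + Fintype.card W := by
  rw [← toLeft_disjSum_toRight (u := s), inducesOdd_iff_bilinear_sum_eq_one hr] at hs
  have hleft := two_mul_card_add_one_le_of_bilinear_sum_eq_one hV hp hs.1 hs.2
  have hright := two_mul_card_add_one_le_of_bilinear_sum_eq_one (Φ := Φ.flip) hW hq hs.2 hs.1
  rw [← card_toLeft_add_card_toRight]
  lia

end BilinearRepresentation

/-- Incidence in the Fano plane: the line `j` consists of the points `j`, `j + 1`, `j + 3`. -/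
def FanoIncident (i j : Fin 7) : Prop := i = j ∨ i = j + 1 ∨ i = j + 3

instance : DecidableRel FanoIncident := fun _ _ ↦ inferInstanceAs (Decidable (_ ∨ _))

/-- The bipartite complement of the Heawood graph; the points are the left summand of
`Fin 7 ⊕ Fin 7`, the lines the right one. -/
def coHeawoodGraph : SimpleGraph (Fin 7 ⊕ Fin 7) := bipartiteGraph fun i j ↦ ¬ FanoIncident i j

/-- Homogeneous coordinates of the points of the Fano plane: `fanoPoint i` lists the coordinates of
`α ^ i` in the basis `1, α, α ^ 2` of `𝔽₈` over `𝔽₂`, where `α ^ 3 = α + 1`. -/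
def fanoPoint : Fin 7 → Fin 3 → ZMod 2 :=
  ![![1, 0, 0], ![0, 1, 0], ![0, 0, 1], ![1, 1, 0], ![0, 1, 1], ![1, 1, 1], ![1, 0, 1]]

/-- Homogeneous coordinates of the lines of the Fano plane: `fanoLine j` is the coefficient vector
of the linear equation of the line `j`. -/
def fanoLine : Fin 7 → Fin 3 → ZMod 2 :=
  ![![0, 0, 1], ![1, 0, 0], ![1, 1, 0], ![1, 1, 1], ![0, 1, 1], ![1, 0, 1], ![0, 1, 0]]

lemma not_fanoIncident_iff (i j : Fin 7) :
    ¬ FanoIncident i j ↔ dotProductBilin (ZMod 2) (ZMod 2) (fanoPoint i) (fanoLine j) = 1 := by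
  revert i j; decide

lemma fanoPoint_injective : fanoPoint.Injective := by decide

lemma fanoLine_injective : fanoLine.Injective := by decide

lemma inducesOdd_coHeawoodGraph_unitVectors :
    InducesOdd coHeawoodGraph (disjSum {0, 1, 2} {0, 1, 6}) :=
  (inducesOdd_iff_bilinear_sum_eq_one not_fanoIncident_iff).2 (by decide)

lemma card_le_six_of_inducesOdd_coHeawoodGraph {s : Finset (Fin 7 ⊕ Fin 7)}
    (hs : InducesOdd coHeawoodGraph s) : #s ≤ 6 := by
  have hrank : 3 ≤ finrank (ZMod 2) (Fin 3 → ZMod 2) := by simp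
  have hcard : Fintype.card (Fin 3 → ZMod 2) = 8 := rfl
  have hbound := hs.two_mul_card_add_two_le hrank hrank fanoPoint_injective fanoLine_injective
    not_fanoIncident_iff
  lia

lemma fo_coHeawoodGraph : fo coHeawoodGraph = 6 :=
  IsGreatest.csSup_eq ⟨⟨_, inducesOdd_coHeawoodGraph_unitVectors, rfl⟩, by
    rintro _ ⟨s, hs, rfl⟩
    exact card_le_six_of_inducesOdd_coHeawoodGraph hs⟩

lemma chromaticNumber_coHeawoodGraph : coHeawoodGraph.chromaticNumber = 2 :=
  chromaticNumber_bipartiteGraph (by decide)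

lemma exists_adj_coHeawoodGraph (v : Fin 7 ⊕ Fin 7) : ∃ w, coHeawoodGraph.Adj v w := by
  have hpoint : ∀ i, ∃ j, ¬ FanoIncident i j := by decide
  have hline : ∀ j, ∃ i, ¬ FanoIncident i j := by decide
  rcases v with i | j
  · exact (hpoint i).imp' .inr fun _ ↦ id
  · exact (hline j).imp' .inl fun _ ↦ id

/-- There exists a finite simple (bipartite) graph on 14 vertices, with chromatic
number 2 and no isolated vertices, such that `f_o(G) = 6 < 14 / 2 = n / χ(G)`. -/
theorem exists_counterexample_scott :
    ∃ (V : Type) (_ : Fintype V) (G : SimpleGraph V),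
      Fintype.card V = 14 ∧ G.chromaticNumber = 2 ∧ (∀ v, ∃ w, G.Adj v w) ∧
      fo G = 6 ∧ (fo G : ℚ) < (Fintype.card V : ℚ) / 2 :=
  ⟨Fin 7 ⊕ Fin 7, inferInstance, coHeawoodGraph, rfl, chromaticNumber_coHeawoodGraph,
    exists_adj_coHeawoodGraph, fo_coHeawoodGraph, by rw [fo_coHeawoodGraph]; norm_num⟩
end

section
/- If T is a tree of order n ≥ 2, then f_o(L(T)) ≥ f(n), where f(n) = ⌈n/2⌉ if n ≡ 0 or 3 (mod 4), and f(n) = ⌊(n-1)/2⌋ if n ≡ 1 or 2 (mod 4). -/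
/-!
An edge `uv` of a subgraph `H` has degree `deg u + deg v - 2` in the line graph of `H`, so the edges
of `H` give an odd induced subgraph exactly when every edge of `H` joins a vertex of odd and a
vertex of even degree. Counting edges at their even ends, their number is then even, and it suffices
to find such an `H` with `2 |H| ≥ n - 2`.

This is a dynamic programming argument on a rooted spanning tree. A rooted piece with `m` edges is
described by the surplus `2 |H| - m` attainable for each prescribed final parity and each current
degree parity at its root. As far as a lower bound is concerned, hanging a piece below a new root
has only four possible effects: those of nothing, of a single vertex, of an edge rooted at an end,
and of a root with two leaves and a pendant path of length two. The surpluses of a root with `α`,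
`β`, `γ` children of the last three kinds are given by explicit formulas, and the parities of
`α + β` and `β + γ` decide which of the four kinds it is in turn. Each kind provides a subgraph with
surplus at least `-1`, which is the inequality above.
-/

open scoped Classical

open SimpleGraph Finset

section LineGraph

variable {V W : Type*} [Fintype V] [Fintype W] {G H : SimpleGraph V} {u v : V}

theorem card_le_fo_of_embedding {K : SimpleGraph W} (f : K ↪g G)
    (hK : ∀ w, Odd (K.degree w)) : Fintype.card W ≤ fo G := by
  refine le_csSup ⟨Fintype.card V, ?_⟩ ⟨univ.map f.toEmbedding, ?_, by simp⟩
  · rintro _ ⟨s, -, rfl⟩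
    exact s.card_le_univ
  · intro v hv
    obtain ⟨w, -, rfl⟩ := mem_map.1 hv
    have hdeg : #{x ∈ univ.map f.toEmbedding | G.Adj (f w) x} = K.degree w := by
      rw [filter_map, card_map, ← card_neighborFinset_eq_degree, neighborFinset_eq_filter]
      simp
    exact hdeg ▸ hK w

theorem degree_lineGraph_add_two (h : H.Adj u v) :
    H.lineGraph.degree ⟨s(u, v), h⟩ + 2 = H.degree u + H.degree v := by
  set N := (H.lineGraph.neighborFinset ⟨s(u, v), h⟩).map (.subtype _) with hN
  have hunion : insert s(u, v) N = H.incidenceFinset u ∪ H.incidenceFinset v := by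
    have huv : s(u, v) ∈ H.edgeSet := h
    ext e
    simp only [hN, mem_insert, mem_map, mem_neighborFinset, lineGraph_adj_iff_exists,
      Function.Embedding.subtype_apply, Subtype.exists, mem_union, incidenceFinset_eq_filter,
      mem_filter, mem_edgeFinset]
    grind
  have hinter : H.incidenceFinset u ∩ H.incidenceFinset v = {s(u, v)} := by
    simpa [← coe_inj] using H.incidenceSet_inter_incidenceSet_of_adj h
  have hcard := card_union_add_card_inter (H.incidenceFinset u) (H.incidenceFinset v)
  rw [hinter, ← hunion, card_insert_of_notMem (by simp [hN]), hN, card_map] at hcard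
  simpa using hcard

theorem card_edgeFinset_le_fo_lineGraph (hle : H ≤ G)
    (hH : ∀ u v, H.Adj u v → Odd (H.degree u + H.degree v)) : #H.edgeFinset ≤ fo G.lineGraph := by
  rw [edgeFinset_card]
  refine card_le_fo_of_embedding (Copy.ofLE H G hle).toLineGraphEmbedding ?_
  rintro ⟨⟨u, v⟩, h⟩
  have hodd := hH u v h
  rw [← degree_lineGraph_add_two h] at hodd
  simpa [parity_simps] using hodd

theorem even_card_edgeFinset_of_odd_degree_add_degree
    (hH : ∀ u v, H.Adj u v → Odd (H.degree u + H.degree v)) : Even #H.edgeFinset := by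
  have hbip : H.IsBipartiteWith ({v | Even (H.degree v)} : Finset V)
      ({v | Odd (H.degree v)} : Finset V) := by
    refine ⟨disjoint_coe.2 <| disjoint_filter.2 fun v _ ↦ Nat.not_odd_iff_even.2, fun u v h ↦ ?_⟩
    have := hH u v h
    simp only [coe_filter, mem_univ, true_and, Set.mem_ofPred_eq]
    grind
  rw [← isBipartiteWith_sum_degrees_eq_card_edges hbip]
  exact even_sum _ fun v hv ↦ (mem_filter.1 hv).2

end LineGraph

section Union

variable {V : Type*} {H H' : SimpleGraph V} {r s : V}

theorem degree_sup_of_disjoint (h : Disjoint H H') (v : V) [Fintype ((H ⊔ H').neighborSet v)]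
    [Fintype (H.neighborSet v)] [Fintype (H'.neighborSet v)] :
    (H ⊔ H').degree v = H.degree v + H'.degree v := by
  simp only [← card_neighborFinset_eq_degree, neighborFinset_sup_of_disjoint _ h, card_disjUnion]

theorem card_edgeFinset_sup_of_disjoint (h : Disjoint H H') [Fintype (H ⊔ H').edgeSet]
    [Fintype H.edgeSet] [Fintype H'.edgeSet] :
    #(H ⊔ H').edgeFinset = #H.edgeFinset + #H'.edgeFinset := by
  rw [edgeFinset_sup, card_union_of_disjoint (disjoint_edgeFinset.2 h)]

theorem degree_edge (h : r ≠ s) (v : V) [Fintype ((edge r s).neighborSet v)] :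
    (edge r s).degree v = if v ∈ s(r, s) then 1 else 0 := by
  rw [← card_incidenceFinset_eq_degree, incidenceFinset_eq_filter, edgeFinset]
  simp only [edgeSet_edge_of_ne h, Set.toFinset_singleton, filter_singleton]
  split_ifs <;> simp

end Union

section PartialSolution

variable {V : Type*} [Fintype V] {G H H' : SimpleGraph V} {A B : Finset V} {r s u v : V}
  {b c d d' : ZMod 2} {k k' : ℤ}

/-- The labelling of the vertices by their degree parities in `H` (`1` for odd), except that the
root `r` has the prescribed label `b`: the parity its degree is to have once further edges have been
added there. -/
noncomputable def rootLabel (H : SimpleGraph V) (r : V) (b : ZMod 2) : V → ZMod 2 :=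
  Function.update (fun v ↦ (H.degree v : ZMod 2)) r b

theorem rootLabel_self : rootLabel H r b r = b := Function.update_self ..

theorem rootLabel_degree : rootLabel H r (H.degree r) v = H.degree v := by simp [rootLabel]

/-- A state of the dynamic programming: a subgraph `H` of `G` inside the vertex set `A` each of
whose edges joins an odd and an even vertex, where the parity `b` of the root `r` is the one it will
have in the end and not necessarily that of its degree in `H`. Vertices outside `A` are kept and are
isolated in `H`, so that pieces can be combined by `⊔`. -/
structure IsPartialSolution (G H : SimpleGraph V) (A : Finset V) (r : V) (b : ZMod 2) :
    Prop where
  le : H ≤ G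
  support_subset : H.support ⊆ A
  label_ne : ∀ u v, H.Adj u v → rootLabel H r b u ≠ rootLabel H r b v

namespace IsPartialSolution

theorem disjoint (h : IsPartialSolution G H A r b) (h' : IsPartialSolution G H' B s c)
    (hAB : Disjoint A B) : Disjoint H H' :=
  disjoint_of_disjoint_support _ <|
    (disjoint_coe.2 hAB).mono h.support_subset h'.support_subset

theorem degree_eq_zero (h : IsPartialSolution G H A r b) (hv : v ∉ A) : H.degree v = 0 :=
  (degree_eq_zero_iff_notMem_support ..).2 fun hv' ↦ hv <| h.support_subset hv'

theorem mem_of_adj (h : IsPartialSolution G H A r b) (huv : H.Adj u v) : u ∈ A ∧ v ∈ A :=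
  ⟨h.support_subset ⟨v, huv⟩, h.support_subset ⟨u, huv.symm⟩⟩

theorem ne_of_eqOn (h : IsPartialSolution G H A r b) {ℓ : V → ZMod 2}
    (hℓ : Set.EqOn ℓ (rootLabel H r b) A) (huv : H.Adj u v) : ℓ u ≠ ℓ v := by
  obtain ⟨hu, hv⟩ := h.mem_of_adj huv
  rw [hℓ hu, hℓ hv]
  exact h.label_ne u v huv

theorem not_adj_sup (h : IsPartialSolution G H A r b) (h' : IsPartialSolution G H' B s c)
    (hr : r ∈ A) (hs : s ∈ B) (hAB : Disjoint A B) : ¬(H ⊔ H').Adj r s := by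
  rintro (hrs | hrs)
  · exact disjoint_left.1 hAB (h.mem_of_adj hrs).2 hs
  · exact disjoint_left.1 hAB hr (h'.mem_of_adj hrs).1

theorem degree_sup_sup_edge (h : IsPartialSolution G H A r b) (h' : IsPartialSolution G H' B s c)
    (hr : r ∈ A) (hs : s ∈ B) (hAB : Disjoint A B) (v : V)
    [Fintype ((H ⊔ H' ⊔ edge r s).neighborSet v)] :
    (H ⊔ H' ⊔ edge r s).degree v = H.degree v + H'.degree v + if v ∈ s(r, s) then 1 else 0 := by
  have hrs : r ≠ s := ne_of_mem_of_not_mem hr (disjoint_right.1 hAB hs)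
  rw [degree_sup_of_disjoint ((disjoint_edge _).2 (h.not_adj_sup h' hr hs hAB)),
    degree_sup_of_disjoint (h.disjoint h' hAB), degree_edge hrs]

theorem support_sup_subset (h : IsPartialSolution G H A r b) (h' : IsPartialSolution G H' B s c) :
    (H ⊔ H').support ⊆ (A ∪ B : Finset V) := by
  rintro u ⟨v, huv | huv⟩
  · exact mem_union_left _ (h.mem_of_adj huv).1
  · exact mem_union_right _ (h'.mem_of_adj huv).1

theorem sup (h : IsPartialSolution G H A r b) (h' : IsPartialSolution G H' B s (H'.degree s))
    (hr : r ∈ A) (hAB : Disjoint A B) : IsPartialSolution G (H ⊔ H') (A ∪ B) r b where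
  le := sup_le h.le h'.le
  support_subset := h.support_sup_subset h'
  label_ne := by
    have hdisj := h.disjoint h' hAB
    have hA : Set.EqOn (rootLabel (H ⊔ H') r b) (rootLabel H r b) A := fun v hv ↦ by
      simp [rootLabel, Function.update_apply, degree_sup_of_disjoint hdisj,
        h'.degree_eq_zero (disjoint_left.1 hAB hv)]
    have hB : Set.EqOn (rootLabel (H ⊔ H') r b) (rootLabel H' s (H'.degree s)) B := fun v hv ↦ by
      have hvA : v ∉ A := disjoint_right.1 hAB hv
      simp [rootLabel, (ne_of_mem_of_not_mem hr hvA).symm, degree_sup_of_disjoint hdisj,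
        h.degree_eq_zero hvA]
    rintro u v (huv | huv)
    · exact h.ne_of_eqOn hA huv
    · exact h'.ne_of_eqOn hB huv

theorem sup_edge (h : IsPartialSolution G H A r b) (h' : IsPartialSolution G H' B s c)
    (hs' : (H'.degree s + 1 : ZMod 2) = c) (hbc : b ≠ c) (hr : r ∈ A) (hs : s ∈ B)
    (hAB : Disjoint A B) (hrs : G.Adj r s) :
    IsPartialSolution G (H ⊔ H' ⊔ edge r s) (A ∪ B) r b where
  le := sup_le (sup_le h.le h'.le) ((edge_le_iff G).2 (.inr hrs))
  support_subset := by
    rintro u ⟨v, huv | huv⟩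
    · exact h.support_sup_subset h' ⟨v, huv⟩
    · obtain ⟨⟨rfl, -⟩ | ⟨rfl, -⟩, -⟩ := (edge_adj ..).1 huv
      exacts [mem_union_left _ hr, mem_union_right _ hs]
  label_ne := by
    have hA : Set.EqOn (rootLabel (H ⊔ H' ⊔ edge r s) r b) (rootLabel H r b) A := fun v hv ↦ by
      have hvB : v ∉ B := disjoint_left.1 hAB hv
      simp +contextual [rootLabel, Function.update_apply, h.degree_sup_sup_edge h' hr hs hAB,
        h'.degree_eq_zero hvB, (ne_of_mem_of_not_mem hs hvB).symm]
    have hB : Set.EqOn (rootLabel (H ⊔ H' ⊔ edge r s) r b) (rootLabel H' s c) B := fun v hv ↦ by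
      have hvA : v ∉ A := disjoint_right.1 hAB hv
      have hvr : v ≠ r := (ne_of_mem_of_not_mem hr hvA).symm
      by_cases hvs : v = s
      · subst hvs
        simp [rootLabel, hvr, h.degree_sup_sup_edge h' hr hs hAB, h.degree_eq_zero hvA, hs']
      · simp [rootLabel, hvr, hvs, h.degree_sup_sup_edge h' hr hs hAB, h.degree_eq_zero hvA]
    have hroots : rootLabel (H ⊔ H' ⊔ edge r s) r b r ≠ rootLabel (H ⊔ H' ⊔ edge r s) r b s := by
      rwa [hB hs, rootLabel_self, rootLabel_self]
    rintro u v ((huv | huv) | huv)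
    · exact h.ne_of_eqOn hA huv
    · exact h'.ne_of_eqOn hB huv
    · obtain ⟨⟨rfl, rfl⟩ | ⟨rfl, rfl⟩, -⟩ := (edge_adj ..).1 huv
      exacts [hroots, hroots.symm]

end IsPartialSolution

/-- Some partial solution on `A` with label `b` at the root `r` has degree parity `d` there and
surplus at least `k`. The surplus is twice the number of edges of the solution minus `#A - 1`, the
number of edges of a tree on `A`. A solution with `b = d` needs no further edges at `r`. -/
def AttainsSurplus (G : SimpleGraph V) (A : Finset V) (r : V) (b d : ZMod 2) (k : ℤ) : Prop :=
  ∃ H, IsPartialSolution G H A r b ∧ (H.degree r : ZMod 2) = d ∧ k ≤ 2 * #H.edgeFinset - (#A - 1)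

namespace AttainsSurplus

theorem mono (h : AttainsSurplus G A r b d k) (hd : d = d') (hk : k' ≤ k) :
    AttainsSurplus G A r b d' k' := by
  obtain ⟨H, hH, hdeg, hsurplus⟩ := h
  exact ⟨H, hH, hdeg.trans hd, hk.trans hsurplus⟩

theorem singleton (G : SimpleGraph V) (r : V) (b : ZMod 2) : AttainsSurplus G {r} r b 0 0 :=
  ⟨⊥, ⟨bot_le, by simp, by simp⟩, by simp, by simp⟩

theorem union (h : AttainsSurplus G A r b d k) (h' : ∃ c, AttainsSurplus G B s c c k')
    (hr : r ∈ A) (hAB : Disjoint A B) : AttainsSurplus G (A ∪ B) r b d (k + k' - 1) := by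
  obtain ⟨H, hH, rfl, hk⟩ := h
  obtain ⟨_, H', hH', rfl, hk'⟩ := h'
  have hdisj := hH.disjoint hH' hAB
  refine ⟨H ⊔ H', hH.sup hH' hr hAB, ?_, ?_⟩
  · simp [degree_sup_of_disjoint hdisj, hH'.degree_eq_zero (disjoint_left.1 hAB hr)]
  · simp only [card_edgeFinset_sup_of_disjoint, hdisj, card_union_of_disjoint hAB]
    lia

theorem union_of_adj (h : AttainsSurplus G A r b d k) (h' : AttainsSurplus G B s c b k')
    (hbc : b ≠ c) (hr : r ∈ A) (hs : s ∈ B) (hAB : Disjoint A B) (hrs : G.Adj r s) :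
    AttainsSurplus G (A ∪ B) r b (d + 1) (k + k' + 1) := by
  obtain ⟨H, hH, rfl, hk⟩ := h
  obtain ⟨H', hH', rfl, hk'⟩ := h'
  have hc : (H'.degree s + 1 : ZMod 2) = c := by
    have add_one_eq_of_ne : ∀ x y : ZMod 2, x ≠ y → x + 1 = y := by decide
    exact add_one_eq_of_ne _ _ hbc
  refine ⟨H ⊔ H' ⊔ edge r s, hH.sup_edge hH' hc hbc hr hs hAB hrs, ?_, ?_⟩
  · simp [hH.degree_sup_sup_edge hH' hr hs hAB, hH'.degree_eq_zero (disjoint_left.1 hAB hr)]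
  · simp only [card_edgeFinset_sup_edge, hH.not_adj_sup hH' hr hs hAB, hrs.ne,
      card_edgeFinset_sup_of_disjoint, hH.disjoint hH' hAB, card_union_of_disjoint hAB,
      not_false_eq_true, ne_eq]
    lia

end AttainsSurplus

end PartialSolution

section RootProfile

variable {V : Type*} [Fintype V] {G : SimpleGraph V} {A B : Finset V} {r s : V} {α β γ : ℕ}

/-- The four ways in which a rooted piece can contribute as a child: it does at least as well as
nothing at all, a single vertex, an edge rooted at an end, or a root with two leaves and a pendant
path of length two (`spider`). The edge to the parent is left `unused` when the child already has
its final parity; it can be used at a parent labelled even (`used_even`) or odd (`used_odd`) when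
the child has the opposite label and will attain it by gaining that edge. -/
inductive ChildKind (G : SimpleGraph V) (A : Finset V) (r : V) : Prop
  | empty (unused : ∃ b, AttainsSurplus G A r b b 1)
  | vertex (unused : ∃ b, AttainsSurplus G A r b b 0) (used_even : AttainsSurplus G A r 1 0 0)
  | edge (unused : ∃ b, AttainsSurplus G A r b b (-1)) (used_even : AttainsSurplus G A r 1 0 (-1))
      (used_odd : AttainsSurplus G A r 0 1 1)
  | spider (unused : ∃ b, AttainsSurplus G A r b b 0) (used_even : AttainsSurplus G A r 1 0 (-4))
      (used_odd : AttainsSurplus G A r 0 1 2)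

theorem ChildKind.exists_attainsSurplus (h : ChildKind G A r) :
    ∃ b, AttainsSurplus G A r b b (-1) := by
  rcases h with ⟨b, h⟩ | ⟨⟨b, h⟩, -⟩ | ⟨⟨b, h⟩, -⟩ | ⟨⟨b, h⟩, -⟩ <;>
    exact ⟨b, h.mono rfl (by lia)⟩

/-- The piece `A` rooted at `r` is at least as good as a root with `α` single vertices, `β` edges
and `γ` spiders (`ChildKind`) as children. Such children add to the surplus `-1`, `-2`, `-1` when
the edge to them is unused, `1`, `0`, `-3` when it is used at an even root, and (edges and spiders
only) `2`, `3` when it is used at an odd root. Taking the better choice at every child gives the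
surpluses in `even` and `odd`; reaching the other degree parity at `r` costs one change of choice,
that is `2` or `4`. -/
structure RootProfile (G : SimpleGraph V) (A : Finset V) (r : V) (α β γ : ℕ) : Prop where
  even : AttainsSurplus G A r 0 (α + β : ℕ) (α - γ)
  even_succ : 1 ≤ α + β + γ → AttainsSurplus G A r 0 (α + β + 1 : ℕ) (α - γ - 2)
  odd : AttainsSurplus G A r 1 (β + γ : ℕ) (2 * β + 3 * γ - α)
  odd_succ : 1 ≤ β + γ → AttainsSurplus G A r 1 (β + γ + 1 : ℕ) (2 * β + 3 * γ - α - 4)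

namespace RootProfile

theorem singleton (G : SimpleGraph V) (r : V) : RootProfile G {r} r 0 0 0 where
  even := .singleton G r 0
  even_succ h := by lia
  odd := .singleton G r 1
  odd_succ h := by lia

theorem union_empty (h : RootProfile G A r α β γ) (unused : ∃ b, AttainsSurplus G B s b b 1)
    (hr : r ∈ A) (hAB : Disjoint A B) : RootProfile G (A ∪ B) r α β γ where
  even := (h.even.union unused hr hAB).mono rfl (by lia)
  even_succ hpos := ((h.even_succ hpos).union unused hr hAB).mono rfl (by lia)
  odd := (h.odd.union unused hr hAB).mono rfl (by lia)
  odd_succ hpos := ((h.odd_succ hpos).union unused hr hAB).mono rfl (by lia)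

theorem union_vertex (h : RootProfile G A r α β γ) (unused : ∃ b, AttainsSurplus G B s b b 0)
    (used_even : AttainsSurplus G B s 1 0 0) (hr : r ∈ A) (hs : s ∈ B) (hAB : Disjoint A B)
    (hrs : G.Adj r s) : RootProfile G (A ∪ B) r (α + 1) β γ where
  even := (h.even.union_of_adj used_even zero_ne_one hr hs hAB hrs).mono
    (by push_cast; ring) (by lia)
  even_succ _ := (h.even.union unused hr hAB).mono (by push_cast; grind) (by lia)
  odd := (h.odd.union unused hr hAB).mono rfl (by lia)
  odd_succ hpos := ((h.odd_succ hpos).union unused hr hAB).mono rfl (by lia)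

theorem union_edge (h : RootProfile G A r α β γ) (unused : ∃ b, AttainsSurplus G B s b b (-1))
    (used_even : AttainsSurplus G B s 1 0 (-1)) (used_odd : AttainsSurplus G B s 0 1 1)
    (hr : r ∈ A) (hs : s ∈ B) (hAB : Disjoint A B) (hrs : G.Adj r s) :
    RootProfile G (A ∪ B) r α (β + 1) γ where
  even := (h.even.union_of_adj used_even zero_ne_one hr hs hAB hrs).mono
    (by push_cast; ring) (by lia)
  even_succ _ := (h.even.union unused hr hAB).mono (by push_cast; grind) (by lia)
  odd := (h.odd.union_of_adj used_odd one_ne_zero hr hs hAB hrs).mono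
    (by push_cast; ring) (by lia)
  odd_succ _ := (h.odd.union unused hr hAB).mono (by push_cast; grind) (by lia)

theorem union_spider (h : RootProfile G A r α β γ) (unused : ∃ b, AttainsSurplus G B s b b 0)
    (used_even : AttainsSurplus G B s 1 0 (-4)) (used_odd : AttainsSurplus G B s 0 1 2)
    (hr : r ∈ A) (hs : s ∈ B) (hAB : Disjoint A B) (hrs : G.Adj r s) :
    RootProfile G (A ∪ B) r α β (γ + 1) where
  even := (h.even.union unused hr hAB).mono rfl (by lia)
  even_succ _ := (h.even.union_of_adj used_even zero_ne_one hr hs hAB hrs).mono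
    (by push_cast; ring) (by lia)
  odd := (h.odd.union_of_adj used_odd one_ne_zero hr hs hAB hrs).mono
    (by push_cast; ring) (by lia)
  odd_succ _ := (h.odd.union unused hr hAB).mono (by push_cast; grind) (by lia)

theorem exists_union (h : RootProfile G A r α β γ) (h' : ChildKind G B s) (hr : r ∈ A)
    (hs : s ∈ B) (hAB : Disjoint A B) (hrs : G.Adj r s) :
    ∃ α β γ, RootProfile G (A ∪ B) r α β γ := by
  cases h' with
  | empty unused => exact ⟨_, _, _, h.union_empty unused hr hAB⟩
  | vertex unused used_even => exact ⟨_, _, _, h.union_vertex unused used_even hr hs hAB hrs⟩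
  | edge unused used_even used_odd =>
    exact ⟨_, _, _, h.union_edge unused used_even used_odd hr hs hAB hrs⟩
  | spider unused used_even used_odd =>
    exact ⟨_, _, _, h.union_spider unused used_even used_odd hr hs hAB hrs⟩

theorem childKind_of_even_of_even (h : RootProfile G A r α β γ) (hαβ : Even (α + β))
    (hβγ : Even (β + γ)) : ChildKind G A r := by
  have even := h.even.mono (ZMod.natCast_eq_zero_iff_even.2 hαβ) le_rfl
  have odd := h.odd.mono (ZMod.natCast_eq_zero_iff_even.2 hβγ) le_rfl
  have odd_succ hpos := (h.odd_succ hpos).mono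
    (ZMod.natCast_eq_one_iff_odd.2 hβγ.add_one) le_rfl
  rcases lt_trichotomy α γ with hαγ | hαγ | hαγ
  · exact .empty ⟨1, (odd_succ (by lia)).mono rfl (by grind)⟩
  · exact .vertex ⟨0, even.mono rfl (by lia)⟩ (odd.mono rfl (by lia))
  · exact .empty ⟨0, even.mono rfl (by lia)⟩

theorem childKind_of_even_of_odd (h : RootProfile G A r α β γ) (hαβ : Even (α + β))
    (hβγ : Odd (β + γ)) : ChildKind G A r := by
  have even := h.even.mono (ZMod.natCast_eq_zero_iff_even.2 hαβ) le_rfl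
  have odd := h.odd.mono (ZMod.natCast_eq_one_iff_odd.2 hβγ) le_rfl
  rcases le_or_gt α γ with hαγ | hαγ
  · exact .empty ⟨1, odd.mono rfl (by grind)⟩
  · exact .empty ⟨0, even.mono rfl (by lia)⟩

theorem childKind_of_odd_of_even (h : RootProfile G A r α β γ) (hαβ : Odd (α + β))
    (hβγ : Even (β + γ)) : ChildKind G A r := by
  have even := h.even.mono (ZMod.natCast_eq_one_iff_odd.2 hαβ) le_rfl
  have even_succ := (h.even_succ (by grind)).mono
    (ZMod.natCast_eq_zero_iff_even.2 hαβ.add_one) le_rfl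
  have odd := h.odd.mono (ZMod.natCast_eq_zero_iff_even.2 hβγ) le_rfl
  have odd_succ hpos := (h.odd_succ hpos).mono
    (ZMod.natCast_eq_one_iff_odd.2 hβγ.add_one) le_rfl
  rcases lt_trichotomy α (γ + 1) with hαγ | hαγ | hαγ
  · exact .empty ⟨1, (odd_succ (by grind)).mono rfl (by grind)⟩
  · exact .edge ⟨0, even_succ.mono rfl (by lia)⟩ (odd.mono rfl (by lia)) (even.mono rfl (by lia))
  · exact .empty ⟨0, even_succ.mono rfl (by grind)⟩

theorem childKind_of_odd_of_odd (h : RootProfile G A r α β γ) (hαβ : Odd (α + β))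
    (hβγ : Odd (β + γ)) : ChildKind G A r := by
  have even := h.even.mono (ZMod.natCast_eq_one_iff_odd.2 hαβ) le_rfl
  have even_succ := (h.even_succ (by grind)).mono
    (ZMod.natCast_eq_zero_iff_even.2 hαβ.add_one) le_rfl
  have odd := h.odd.mono (ZMod.natCast_eq_one_iff_odd.2 hβγ) le_rfl
  have odd_succ := (h.odd_succ hβγ.pos).mono (ZMod.natCast_eq_zero_iff_even.2 hβγ.add_one) le_rfl
  rcases lt_trichotomy α (γ + 2) with hαγ | hαγ | hαγ
  · exact .empty ⟨1, odd.mono rfl (by grind)⟩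
  · exact .spider ⟨0, even_succ.mono rfl (by lia)⟩ (odd_succ.mono rfl (by grind))
      (even.mono rfl (by lia))
  · exact .empty ⟨0, even_succ.mono rfl (by grind)⟩

theorem childKind (h : RootProfile G A r α β γ) : ChildKind G A r := by
  rcases (α + β).even_or_odd with hαβ | hαβ <;> rcases (β + γ).even_or_odd with hβγ | hβγ
  exacts [h.childKind_of_even_of_even hαβ hβγ, h.childKind_of_even_of_odd hαβ hβγ,
    h.childKind_of_odd_of_even hαβ hβγ, h.childKind_of_odd_of_odd hαβ hβγ]

end RootProfile

end RootProfile

section RootedPiece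

variable {V : Type*} {G : SimpleGraph V} {A : Finset V} {r u v : V}

/-- The vertex set `A` with root `r` is built from single vertices by repeatedly hanging one rooted
piece below the root of another along an edge of `G`. The tree so described is not recorded. -/
inductive RootedPiece (G : SimpleGraph V) : Finset V → V → Prop
  | singleton (r : V) : RootedPiece G {r} r
  | union {A B : Finset V} {r s : V} (hA : RootedPiece G A r) (hB : RootedPiece G B s)
      (hAB : Disjoint A B) (hrs : G.Adj r s) : RootedPiece G (A ∪ B) r

namespace RootedPiece

theorem root_mem (h : RootedPiece G A r) : r ∈ A := by
  induction h with
  | singleton r => exact mem_singleton_self r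
  | union _ _ _ _ ihA _ => exact mem_union_left _ ihA

theorem insert_leaf (h : RootedPiece G A r) (hu : u ∈ A) (hv : v ∉ A) (huv : G.Adj u v) :
    RootedPiece G (insert v A) r := by
  induction h with
  | singleton r =>
    obtain rfl := mem_singleton.1 hu
    rw [insert_eq, union_comm]
    exact (singleton u).union (singleton v) (disjoint_singleton.2 huv.ne) huv
  | union hA hB hAB hrs ihA ihB =>
    rw [mem_union, not_or] at hv
    rcases mem_union.1 hu with hu | hu
    · rw [← insert_union]
      exact (ihA hu hv.1).union hB (disjoint_insert_left.2 ⟨hv.2, hAB⟩) hrs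
    · rw [← union_insert]
      exact hA.union (ihB hu hv.2) (disjoint_insert_right.2 ⟨hv.1, hAB⟩) hrs

theorem univ [Fintype V] (hG : G.Connected) (r : V) : RootedPiece G univ r := by
  obtain ⟨A, hA, hmax⟩ := (Set.toFinite {A | RootedPiece G A r}).exists_maximal ⟨{r}, singleton r⟩
  suffices A = Finset.univ from this ▸ hA
  by_contra! hne
  obtain ⟨w, hw⟩ : ∃ w, w ∉ A := by simpa [eq_univ_iff_forall] using hne
  obtain ⟨p⟩ := hG.preconnected r w
  obtain ⟨d, -, hfst, hsnd⟩ := p.exists_boundary_dart A (by simpa using hA.root_mem) (by simpa)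
  exact hsnd <| hmax (hA.insert_leaf hfst hsnd d.adj) (subset_insert _ _) (mem_insert_self _ _)

theorem exists_rootProfile [Fintype V] (h : RootedPiece G A r) :
    ∃ α β γ, RootProfile G A r α β γ := by
  induction h with
  | singleton r => exact ⟨0, 0, 0, .singleton G r⟩
  | union hA hB hAB hrs ihA ihB =>
    obtain ⟨_, _, _, hA'⟩ := ihA
    obtain ⟨_, _, _, hB'⟩ := ihB
    exact hA'.exists_union hB'.childKind hA.root_mem hB.root_mem hAB hrs

end RootedPiece

end RootedPiece

theorem exists_le_forall_odd_degree_add_degree {V : Type*} [Fintype V] {G : SimpleGraph V}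
    (hG : G.Connected) : ∃ H ≤ G, (∀ u v, H.Adj u v → Odd (H.degree u + H.degree v)) ∧
      Fintype.card V ≤ 2 * #H.edgeFinset + 2 := by
  obtain ⟨r⟩ := hG.nonempty
  obtain ⟨α, β, γ, hprofile⟩ := (RootedPiece.univ hG r).exists_rootProfile
  obtain ⟨_, H, hH, rfl, hsurplus⟩ := hprofile.childKind.exists_attainsSurplus
  refine ⟨H, hH.le, fun u v huv ↦ ?_, by rw [card_univ] at hsurplus; lia⟩
  have hne := hH.label_ne u v huv
  rw [rootLabel_degree, rootLabel_degree, Ne, ZMod.natCast_eq_natCast_iff'] at hne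
  grind

theorem fo_lineGraph_tree_general {V : Type*} [Fintype V] (G : SimpleGraph V) (hG : G.Connected) :
    fo G.lineGraph ≥
      (if Fintype.card V % 4 = 0 ∨ Fintype.card V % 4 = 3 then
        (Fintype.card V + 1) / 2 else (Fintype.card V - 1) / 2) := by
  obtain ⟨H, hle, hodd, hcard⟩ := exists_le_forall_odd_degree_add_degree hG
  have hfo : #H.edgeFinset ≤ fo G.lineGraph := card_edgeFinset_le_fo_lineGraph hle hodd
  have heven : Even #H.edgeFinset := even_card_edgeFinset_of_odd_degree_add_degree hodd
  split_ifs <;> grind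

/-- If `T` is a tree of order `n ≥ 2`, then `f_o(L(T)) ≥ f(n)`, where `f(n) = ⌈n/2⌉` if
`n ≡ 0, 3 (mod 4)` and `f(n) = ⌊(n-1)/2⌋` if `n ≡ 1, 2 (mod 4)`. -/
theorem fo_lineGraph_tree {V : Type*} [Fintype V] (T : SimpleGraph V)
    (hT : T.IsTree) (hn : 2 ≤ Fintype.card V) :
    fo T.lineGraph ≥
      (if Fintype.card V % 4 = 0 ∨ Fintype.card V % 4 = 3 then
        (Fintype.card V + 1) / 2 else (Fintype.card V - 1) / 2) :=
  fo_lineGraph_tree_general T hT.connected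
end

section
/- If G is a finite simple graph with m ≥ 2 edges in which every connected component has at least 3 vertices, then f_o(L(G)) ≥ m/χ(L(G)), where χ(L(G)) is the chromatic number of the line graph of G; equivalently, χ(L(G)) · f_o(L(G)) ≥ m. -/
open scoped Classical

/-!
Edges and odd induced subgraphs of `L(G)` add up over the components of `G`, so let `G` be connected
with `N ≥ 3` vertices, and let `D` be the number of colours. A colour class of `L(G)` is a matching
of `G`, so `G` has at most `D * ⌊N / 2⌋` edges. On the other hand, if every edge of a subgraph `F`
of `G` has exactly one endpoint of odd degree in `F`, then the edges of `F` induce an odd subgraph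
of `L(G)`. Choosing `F` in a spanning tree, with its odd-degree vertices in the larger side of the
bipartition, gives `2 * ⌊(N + 1) / 4⌋ ≤ fo L(G)`. These two bounds suffice unless `N % 4 = 2`, when
one of them has to be improved.

So let `N % 4 = 2`. If no colour class is a perfect matching, the edge bound improves to
`D * (N / 2 - 1)`. Otherwise take a spanning tree `T` that contains a perfect matching of `G` and
has as few leaves as possible. Suppose that a leaf of `T` has an edge of `G` to a vertex other than
its partner. By the choice of `T` this edge does not allow a leaf-reducing exchange, and then either
it gives a spanning tree whose bipartition is unbalanced, or it closes a cyclic chain of four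
connected parts of odd size. One of these parts has size `3` mod `4`, and adding the lower bounds
for this part and for its (connected) complement beats the lower bound for `N`. Suppose now that all
leaves of `T` are leaves of `G`. If there are at least three of them, counting degrees improves the
edge bound; if there are only two, then `T` is a path and its first three vertices form a part of
size `3` as above.
-/

namespace OddLine

open Finset SimpleGraph
open scoped symmDiff

variable {V : Type*} {G F H K T : SimpleGraph V} {D : ℕ} {μ : V → V}

/-! ### Odd induced subgraphs of line graphs -/

section OddInducedSubgraph

variable [Fintype V]

theorem card_le_fo {s : Finset V} (hs : ∀ v ∈ s, Odd #{u ∈ s | G.Adj v u}) : #s ≤ fo G :=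
  le_csSup ⟨Fintype.card V, fun _ ⟨t, _, ht⟩ ↦ ht ▸ t.card_le_univ⟩ ⟨s, hs, rfl⟩

variable (G) in
theorem exists_card_eq_fo : ∃ s : Finset V, (∀ v ∈ s, Odd #{u ∈ s | G.Adj v u}) ∧ #s = fo G :=
  Nat.sSup_mem (s := {n | ∃ s : Finset V, (∀ v ∈ s, Odd #{u ∈ s | G.Adj v u}) ∧ #s = n})
    ⟨0, ∅, by simp, rfl⟩ ⟨Fintype.card V, fun _ ⟨t, _, ht⟩ ↦ ht ▸ t.card_le_univ⟩

theorem card_le_fo_of_embedding {W : Type*} [Fintype W] {H : SimpleGraph W} (φ : H ↪g G)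
    (hH : ∀ w, Odd (H.degree w)) : Fintype.card W ≤ fo G := by
  rw [← card_univ, ← card_map φ.toEmbedding]
  refine card_le_fo fun v hv ↦ ?_
  obtain ⟨w, -, rfl⟩ := mem_map.1 hv
  convert hH w
  rw [← card_neighborFinset_eq_degree, ← card_map φ.toEmbedding]
  congr 1
  ext u
  simp only [RelEmbedding.coe_toEmbedding, mem_filter, mem_map, mem_univ, true_and,
    mem_neighborFinset]
  grind [φ.map_adj_iff]

theorem sum_fo_le_fo {ι : Type*} [Fintype ι] {W : ι → Type*} [∀ i, Fintype (W i)]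
    {H : ∀ i, SimpleGraph (W i)} (φ : ∀ i, H i ↪g G)
    (hne : ∀ i j a b, φ i a = φ j b → i = j) (hadj : ∀ i j a b, G.Adj (φ i a) (φ j b) → i = j) :
    ∑ i, fo (H i) ≤ fo G := by
  choose s hs hcard using fun i ↦ exists_card_eq_fo (H i)
  have hdisj : (Set.univ : Set ι).PairwiseDisjoint fun i ↦ (s i).map (φ i).toEmbedding := by
    intro i _ j _ hij
    simp only [Function.onFun, Finset.disjoint_left, mem_map, not_exists, not_and]
    rintro _ ⟨a, _, rfl⟩ b _ hab
    exact hij (hne i j a b hab.symm)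
  rw [← sum_congr rfl fun i _ ↦ hcard i, ← sum_congr rfl fun i _ ↦ card_map (φ i).toEmbedding,
    ← card_biUnion (by simpa using hdisj)]
  refine card_le_fo fun v hv ↦ ?_
  obtain ⟨i, -, a, ha, rfl⟩ : ∃ i ∈ univ, ∃ a ∈ s i, φ i a = v := by simpa using hv
  convert hs i a ha using 1
  rw [← card_map (φ i).toEmbedding]
  congr 1
  ext u
  simp only [mem_filter, mem_biUnion, mem_univ, true_and, mem_map]
  constructor
  · rintro ⟨⟨j, b, hb, rfl⟩, h⟩
    obtain rfl := hadj i j a b h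
    exact ⟨b, ⟨hb, (φ i).map_adj_iff.1 h⟩, rfl⟩
  · rintro ⟨b, ⟨hb, h⟩, rfl⟩
    exact ⟨⟨i, b, hb, rfl⟩, (φ i).map_adj_iff.2 h⟩

theorem sum_fo_lineGraph_induce_le {ι : Type*} [Fintype ι] {s : ι → Set V}
    (hs : Pairwise fun i j ↦ Disjoint (s i) (s j)) :
    ∑ i, fo (G.induce (s i)).lineGraph ≤ fo G.lineGraph := by
  let φ i := (Embedding.induce (G := G) (s i)).toCopy.toLineGraphEmbedding
  have hφ i (e : (G.induce (s i)).edgeSet) v (hv : v ∈ (φ i e : Sym2 V)) : v ∈ s i := by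
    obtain ⟨w, -, rfl⟩ := Sym2.mem_map.1 hv
    exact w.2
  have hmeet i j e e' v (hv : v ∈ (φ i e : Sym2 V)) (hv' : v ∈ (φ j e' : Sym2 V)) : i = j := by
    by_contra hij
    exact Set.disjoint_left.1 (hs hij) (hφ i e v hv) (hφ j e' v hv')
  refine sum_fo_le_fo φ (fun i j e e' h ↦ ?_) fun i j e e' h ↦ ?_
  · exact hmeet i j e e' _ (Sym2.out_fst_mem _) (h ▸ Sym2.out_fst_mem _)
  · obtain ⟨-, v, hv, hv'⟩ := lineGraph_adj_iff_exists.1 h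
    exact hmeet i j e e' v hv hv'

theorem fo_lineGraph_induce_add_fo_lineGraph_induce_compl_le (G : SimpleGraph V) (s : Set V) :
    fo (G.induce s).lineGraph + fo (G.induce sᶜ).lineGraph ≤ fo G.lineGraph := by
  have hdisj : Pairwise fun i j ↦ Disjoint (cond i s sᶜ) (cond j s sᶜ) := by
    rintro (_ | _) (_ | _) <;> simp [disjoint_compl_left, disjoint_compl_right]
  have hsum := sum_fo_lineGraph_induce_le (G := G) hdisj
  simp only [Fintype.sum_bool, cond_true, cond_false] at hsum
  convert hsum

theorem degree_lineGraph_add_two {u v : V} (h : F.Adj u v) :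
    F.lineGraph.degree ⟨s(u, v), h⟩ + 2 = F.degree u + F.degree v := by
  have hN : (F.lineGraph.neighborFinset ⟨s(u, v), h⟩).map (.subtype _) =
      (F.incidenceFinset u ∪ F.incidenceFinset v) \ {s(u, v)} := by
    ext e
    simp only [mem_map, mem_neighborFinset, lineGraph_adj_iff_exists]
    simp only [ne_eq, Subtype.ext_iff, Sym2.mem_iff, exists_eq_or_imp, ↓existsAndEq, true_and,
      Function.Embedding.subtype_apply, Subtype.exists, exists_and_left, exists_prop,
      exists_eq_right_right, mem_sdiff, mem_union, mem_incidenceFinset, incidenceSet,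
      Set.mem_ofPred_eq, mem_singleton]
    grind
  have hinter : F.incidenceFinset u ∩ F.incidenceFinset v = {s(u, v)} := by
    rw [← coe_inj]
    simpa using F.incidenceSet_inter_incidenceSet_of_adj h
  have hcard := card_union_add_card_inter (F.incidenceFinset u) (F.incidenceFinset v)
  rw [hinter, card_singleton, card_incidenceFinset_eq_degree,
    card_incidenceFinset_eq_degree] at hcard
  have : #((F.incidenceFinset u ∪ F.incidenceFinset v) \ {s(u, v)}) + 1 = _ :=
    card_sdiff_add_card_eq_card (by simp [incidenceSet, h])
  rw [← hN, card_map, card_neighborFinset_eq_degree] at this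
  lia

theorem card_edgeFinset_le_fo (hFG : F ≤ G)
    (hF : ∀ ⦃u v⦄, F.Adj u v → Odd (F.degree u + F.degree v)) :
    #F.edgeFinset ≤ fo G.lineGraph := by
  rw [edgeFinset_card]
  refine card_le_fo_of_embedding (Copy.ofLE F G hFG).toLineGraphEmbedding ?_
  rintro ⟨⟨u, v⟩, huv⟩
  have := degree_lineGraph_add_two huv
  have := hF huv
  have : Odd (F.lineGraph.degree ⟨s(u, v), huv⟩) := by grind
  exact this

end OddInducedSubgraph

/-! ### Subgraphs with prescribed degree parities -/

section DegreeParity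

variable [Fintype V]

/-- The vector of vertex degrees of `F` modulo two, in other words the boundary of the `1`-chain `F`
with coefficients in `ZMod 2`. -/
noncomputable def degreeParity (F : SimpleGraph V) : V → ZMod 2 := fun x ↦ F.degree x

theorem degreeParity_apply (F : SimpleGraph V) (x : V) [Fintype (F.neighborSet x)] :
    degreeParity F x = F.degree x := by
  simp only [degreeParity]
  congr!

theorem degreeParity_symmDiff (F H : SimpleGraph V) :
    degreeParity (F ∆ H) = degreeParity F + degreeParity H := by
  ext x
  have h : (F ∆ H).neighborFinset x = F.neighborFinset x ∆ H.neighborFinset x := by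
    ext y
    rw [mem_neighborFinset, Finset.mem_symmDiff, mem_neighborFinset, mem_neighborFinset]
    rfl
  have hcard : #(F.neighborFinset x ∆ H.neighborFinset x) +
      2 * #(F.neighborFinset x ∩ H.neighborFinset x) = F.degree x + H.degree x := by
    rw [symmDiff_def, sup_eq_union, card_union_of_disjoint disjoint_sdiff_sdiff]
    have := card_sdiff_add_card_inter (F.neighborFinset x) (H.neighborFinset x)
    have := card_sdiff_add_card_inter (H.neighborFinset x) (F.neighborFinset x)
    rw [inter_comm] at this
    simp only [card_neighborFinset_eq_degree] at *
    lia
  have := congrArg (Nat.cast : ℕ → ZMod 2) hcard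
  rw [← h, card_neighborFinset_eq_degree] at this
  push_cast [CharTwo.two_eq_zero] at this
  simpa [degreeParity] using this

theorem degreeParity_edge {u v : V} (huv : u ≠ v) :
    degreeParity (edge u v) = Pi.single u 1 + Pi.single v 1 := by
  ext x
  have h : (edge u v).neighborFinset x = if x = u then {v} else if x = v then {u} else ∅ := by
    ext y
    rw [mem_neighborFinset, edge_adj]
    grind
  rw [degreeParity_apply, ← card_neighborFinset_eq_degree, h, Pi.add_apply, Pi.single_apply,
    Pi.single_apply]
  split_ifs <;> simp_all

theorem exists_le_degreeParity_eq_single_add_single {u v : V} (p : G.Walk u v) :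
    ∃ F ≤ G, degreeParity F = Pi.single u 1 + Pi.single v 1 := by
  induction p with
  | nil => exact ⟨⊥, bot_le, funext fun x ↦ by simp [degreeParity, CharTwo.add_self_eq_zero]⟩
  | @cons u v w h _ ih =>
    obtain ⟨F, hFG, hF⟩ := ih
    have huv : edge u v ≤ G := by simpa [edge_le_iff] using .inr h
    refine ⟨edge u v ∆ F, symmDiff_le_sup.trans (sup_le huv hFG), ?_⟩
    rw [degreeParity_symmDiff, degreeParity_edge h.ne, hF, ZModModule.add_add_add_cancel]

theorem exists_le_degreeParity_eq_sum (hG : G.Connected) (S : Finset V) (r : V) :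
    ∃ F ≤ G, degreeParity F = ∑ a ∈ S, (Pi.single a 1 + Pi.single r 1) := by
  induction S using Finset.induction_on with
  | empty => exact ⟨⊥, bot_le, funext fun x ↦ by simp [degreeParity]⟩
  | insert a S ha ih =>
    obtain ⟨F, hFG, hF⟩ := ih
    obtain ⟨P, hPG, hP⟩ := exists_le_degreeParity_eq_single_add_single (hG a r).some
    refine ⟨P ∆ F, symmDiff_le_sup.trans (sup_le hPG hFG), ?_⟩
    rw [degreeParity_symmDiff, hF, hP, sum_insert ha]

theorem exists_le_odd_degree_iff_mem (hG : G.Connected) {S : Finset V} (hS : Even #S) :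
    ∃ F ≤ G, ∀ x, Odd (F.degree x) ↔ x ∈ S := by
  have := hG.nonempty
  obtain ⟨F, hFG, hF⟩ := exists_le_degreeParity_eq_sum hG S (Classical.arbitrary V)
  refine ⟨F, hFG, fun x ↦ ?_⟩
  have hcard : (#S : ZMod 2) = 0 := hS.natCast_zmod_two
  rw [← ZMod.natCast_eq_one_iff_odd, ← degreeParity_apply, hF]
  simp [sum_add_distrib, hcard, Pi.single_apply]

theorem card_le_fo_of_isBipartiteWith (hHG : H ≤ G) (hH : H.Connected) {B S : Finset V}
    (hB : H.IsBipartiteWith B ↑Bᶜ) (hSB : S ⊆ B) (hS : Even #S)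
    (hdeg : ∀ v ∈ B, v ∉ S → H.degree v ≤ 1) : #S ≤ fo G.lineGraph := by
  obtain ⟨F, hFH, hF⟩ := exists_le_odd_degree_iff_mem hH hS
  have hFB : F.IsBipartiteWith B ↑Bᶜ := ⟨hB.disjoint, fun _ _ h ↦ hB.mem_of_adj (hFH h)⟩
  have hodd ⦃u v⦄ (h : F.Adj u v) (hu : u ∈ B) (hv : v ∉ B) : Odd (F.degree u + F.degree v) := by
    have huS : u ∈ S := by
      by_contra huS
      have hle : F.degree u ≤ 1 := (degree_le_of_le hFH).trans (hdeg u hu huS)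
      have hone : F.degree u = 1 := le_antisymm hle h.degree_pos_left
      exact huS ((hF u).1 (hone ▸ odd_one))
    exact ((hF u).2 huS).add_even (Nat.not_odd_iff_even.1 ((hF v).not.2 fun hvS ↦ hv (hSB hvS)))
  calc #S ≤ ∑ v ∈ B, F.degree v := by
        rw [card_eq_sum_ones]
        refine (sum_le_sum fun v hv ↦ ((hF v).2 hv).pos).trans (sum_le_sum_of_subset hSB)
    _ = #F.edgeFinset := isBipartiteWith_sum_degrees_eq_card_edges hFB
    _ ≤ fo G.lineGraph := by
        refine card_edgeFinset_le_fo (hFH.trans hHG) fun u v huv ↦ ?_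
        obtain ⟨hu, hv⟩ | ⟨hu, hv⟩ := hFB.mem_of_adj huv
        · exact hodd huv hu (mem_compl.1 hv)
        · exact add_comm (F.degree u) _ ▸ hodd huv.symm hv (mem_compl.1 hu)

theorem exists_isBipartiteWith_compl (hG : G.IsBipartite) :
    ∃ B : Finset V, G.IsBipartiteWith B ↑Bᶜ := by
  obtain ⟨s, t, h⟩ := isBipartite_iff_exists_isBipartiteWith.1 hG
  refine ⟨s.toFinset, disjoint_coe.2 disjoint_compl_right, fun u v huv ↦ ?_⟩
  have := h.mem_of_adj huv
  have := h.disjoint.notMem_of_mem_left (a := u)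
  have := h.disjoint.notMem_of_mem_left (a := v)
  simp only [coe_compl, Set.coe_toFinset, Set.mem_compl_iff]
  tauto

theorem two_mul_le_fo (hG : G.Connected) : 2 * ((Fintype.card V + 1) / 4) ≤ fo G.lineGraph := by
  obtain ⟨T, hTG, hT⟩ := hG.exists_isTree_le
  obtain ⟨B, hB, hBcard⟩ : ∃ B : Finset V, T.IsBipartiteWith B ↑Bᶜ ∧ Fintype.card V ≤ 2 * #B := by
    obtain ⟨B, hB⟩ := exists_isBipartiteWith_compl hT.isBipartite
    by_cases h : Fintype.card V ≤ 2 * #B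
    · exact ⟨B, hB, h⟩
    · exact ⟨Bᶜ, by simpa using hB.symm, by grind [card_compl]⟩
  rcases Nat.even_or_odd #B with heven | hodd
  · have := card_le_fo_of_isBipartiteWith hTG hT.connected hB subset_rfl heven (by grind)
    grind
  · obtain ⟨v, hv, hdeg⟩ : ∃ v ∈ B, T.degree v < 2 := by
      refine exists_lt_of_sum_lt ?_
      rw [isBipartiteWith_sum_degrees_eq_card_edges hB]
      have := hT.card_edgeFinset
      simp only [sum_const, smul_eq_mul]
      lia
    have := card_le_fo_of_isBipartiteWith hTG hT.connected hB (erase_subset v B) (by grind)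
      (by grind)
    grind

theorem half_lt_fo_of_connected_compl {s : Set V} (hs : (G.induce s).Connected)
    (hsc : (G.induce sᶜ).Connected) (hs4 : s.ncard % 4 = 3) (hV : Fintype.card V % 4 = 2) :
    Fintype.card V / 2 < fo G.lineGraph := by
  have hcard := s.ncard_add_ncard_compl
  have hfo := two_mul_le_fo hs
  have hfoc := two_mul_le_fo hsc
  rw [← Nat.card_eq_fintype_card, Nat.card_coe_set_eq] at hfo hfoc
  rw [Nat.card_eq_fintype_card] at hcard
  calc Fintype.card V / 2 < 2 * ((s.ncard + 1) / 4) + 2 * ((sᶜ.ncard + 1) / 4) := by lia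
    _ ≤ fo (G.induce s).lineGraph + fo (G.induce sᶜ).lineGraph := add_le_add hfo hfoc
    _ ≤ fo G.lineGraph := fo_lineGraph_induce_add_fo_lineGraph_induce_compl_le G s

end DegreeParity

/-! ### Colourings of line graphs and matchings -/

/-- `IsMatchingInvolution G μ` says that `{s(v, μ v) | v}` is a perfect matching of `G`. A perfect
matching is encoded by the map sending each vertex to its partner. -/
structure IsMatchingInvolution (G : SimpleGraph V) (μ : V → V) : Prop where
  involutive : μ.Involutive
  adj : ∀ v, G.Adj v (μ v)

section Coloring

theorem card_biUnion_toFinset_of_isIndepSet_lineGraph {M : Finset G.edgeSet}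
    (hM : G.lineGraph.IsIndepSet M) : #(M.biUnion fun e ↦ (e : Sym2 V).toFinset) = 2 * #M := by
  have hcard (e : G.edgeSet) : #(e : Sym2 V).toFinset = 2 :=
    Sym2.card_toFinset_of_not_isDiag _ (G.not_isDiag_of_mem_edgeSet e.2)
  rw [card_biUnion, sum_const_nat fun e _ ↦ hcard e, mul_comm]
  intro e he e' he' hne
  refine disjoint_left.2 fun v hv hv' ↦ hM he he' hne ?_
  exact lineGraph_adj_iff_exists.2 ⟨hne, v, Sym2.mem_toFinset.1 hv, Sym2.mem_toFinset.1 hv'⟩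

variable [Fintype V]

theorem two_mul_card_le_of_isIndepSet_lineGraph {M : Finset G.edgeSet}
    (hM : G.lineGraph.IsIndepSet M) : 2 * #M ≤ Fintype.card V :=
  card_biUnion_toFinset_of_isIndepSet_lineGraph hM ▸ card_le_univ _

theorem exists_isMatchingInvolution {M : Finset G.edgeSet} (hM : G.lineGraph.IsIndepSet M)
    (hcard : 2 * #M = Fintype.card V) : ∃ μ, IsMatchingInvolution G μ := by
  have hcover (v : V) : ∃ e ∈ M, v ∈ (e : Sym2 V) := by
    have huniv := (card_eq_iff_eq_univ _).1
      (hcard ▸ card_biUnion_toFinset_of_isIndepSet_lineGraph hM)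
    simpa using huniv.ge (mem_univ v)
  choose e heM hve using hcover
  have huniq {u v : V} (h : u ∈ (e v : Sym2 V)) : e u = e v := by
    by_contra hne
    exact hM (heM u) (heM v) hne (lineGraph_adj_iff_exists.2 ⟨hne, u, hve u, h⟩)
  let μ (v : V) := Sym2.Mem.other (hve v)
  have hμ (v : V) : s(v, μ v) = e v := Sym2.other_spec (hve v)
  have hmem (v : V) : μ v ∈ (e v : Sym2 V) := Sym2.other_mem (hve v)
  refine ⟨μ, fun v ↦ ?_, fun v ↦ ?_⟩
  · refine (Sym2.congr_right (a := μ v)).1 ?_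
    rw [hμ, huniq (hmem v), ← hμ v, Sym2.eq_swap]
  · rw [← mem_edgeSet, hμ]
    exact (e v).2

theorem exists_isIndepSet_lt_card (hG : G.Colorable D) {k : ℕ} (hk : D * k < Fintype.card V) :
    ∃ s : Finset V, G.IsIndepSet s ∧ k < #s := by
  obtain ⟨C⟩ := hG
  obtain ⟨i, -, hi⟩ := exists_lt_card_fiber_of_mul_lt_card_of_maps_to (s := univ) (t := univ)
    (f := C) (n := k) (by simp) (by simpa using hk)
  exact ⟨_, by simpa [Coloring.colorClass] using C.isIndepSet_colorClass i, hi⟩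

theorem card_edgeFinset_le_mul (hG : G.lineGraph.Colorable D) :
    #G.edgeFinset ≤ D * (Fintype.card V / 2) := by
  by_contra! hlt
  obtain ⟨M, hM, hcard⟩ := exists_isIndepSet_lt_card hG (hlt.trans_eq G.edgeFinset_card)
  have := two_mul_card_le_of_isIndepSet_lineGraph hM
  lia

theorem exists_isMatchingInvolution_of_lt {k : ℕ} (hG : G.lineGraph.Colorable D)
    (hV : Fintype.card V = 2 * (k + 1)) (hk : D * k < #G.edgeFinset) :
    ∃ μ, IsMatchingInvolution G μ := by
  obtain ⟨M, hM, hcard⟩ := exists_isIndepSet_lt_card hG (hk.trans_eq G.edgeFinset_card)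
  have := two_mul_card_le_of_isIndepSet_lineGraph hM
  exact exists_isMatchingInvolution hM (by lia)

theorem degree_le_of_colorable_lineGraph (hG : G.lineGraph.Colorable D) (v : V) :
    G.degree v ≤ D := by
  let I : Finset G.edgeSet := {e | v ∈ (e : Sym2 V)}
  have hI : I.map (.subtype _) = G.incidenceFinset v := by
    ext e
    simp [I, incidenceSet, and_comm]
  have hclique : G.lineGraph.IsClique I := fun e he e' he' hne ↦
    lineGraph_adj_iff_exists.2 ⟨hne, v, (mem_filter.1 he).2, (mem_filter.1 he').2⟩
  rw [← card_incidenceFinset_eq_degree, ← hI, card_map]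
  exact hclique.card_le_of_colorable hG

theorem two_mul_card_edgeFinset_le (hG : G.Connected) (hD : ∀ v, G.degree v ≤ D)
    (hleaf : 3 ≤ #{x | G.degree x = 1}) :
    2 * #G.edgeFinset ≤ D * (Fintype.card V - 2) := by
  set L : Finset V := {x | G.degree x = 1}
  have hle : ∑ v, G.degree v ≤ #L + D * #Lᶜ := by
    rw [← sum_add_sum_compl L, card_eq_sum_ones, mul_comm, ← smul_eq_mul]
    exact add_le_add (sum_le_sum fun v hv ↦ (mem_filter.1 hv).2.le)
      (sum_le_card_nsmul _ _ _ fun v _ ↦ hD v)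
  have hedge := hG.card_vert_le_card_edgeSet_add_one
  rw [Nat.card_eq_fintype_card, Nat.card_eq_fintype_card, ← edgeFinset_card] at hedge
  have hL : #L + #Lᶜ = Fintype.card V := card_add_card_compl L
  rw [sum_degrees_eq_twice_card_edges] at hle
  obtain ⟨l, hl⟩ := Nat.exists_eq_add_of_le hleaf
  have hN : Fintype.card V - 2 = l + 1 + #Lᶜ := by lia
  rw [hN]
  rcases le_or_gt D 2 with h2 | h2
  -- A connected graph with at least three leaves has a vertex of degree at least three.
  · have := Nat.mul_le_mul_right #Lᶜ h2
    lia
  · have := Nat.mul_le_mul_right (l + 1) h2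
    lia

end Coloring

/-! ### Connected components and edge exchange in trees -/

section Tree

theorem pred_of_reachable {P : V → Prop} {x y : V} (h : K.Reachable x y)
    (hP : ∀ ⦃a b⦄, K.Adj a b → P a → P b) (hx : P x) : P y := by
  obtain ⟨p⟩ := h
  induction p with
  | nil => exact hx
  | cons h _ ih => exact ih (hP h hx)

theorem connected_induce_supp_of_le (hKG : K ≤ G) (c : K.ConnectedComponent) :
    (G.induce c.supp).Connected :=
  c.connected_toSimpleGraph.mono (comap_monotone _ hKG)

theorem isTree_deleteEdges_sup_edge (hT : T.IsTree) {x y a b : V} (hxy : T.Adj x y)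
    (hx : (T.deleteEdges {s(x, y)}).Reachable x a) (hy : (T.deleteEdges {s(x, y)}).Reachable y b) :
    (T.deleteEdges {s(x, y)} ⊔ edge a b).IsTree := by
  have hbridge : ¬(T.deleteEdges {s(x, y)}).Reachable x y :=
    isAcyclic_iff_forall_adj_isBridge.1 hT.isAcyclic hxy
  have hab : ¬(T.deleteEdges {s(x, y)}).Reachable a b := fun h ↦
    hbridge (hx.trans (h.trans hy.symm))
  have hab' : (T.deleteEdges {s(x, y)} ⊔ edge a b).Reachable a b :=
    Adj.reachable (.inr ((edge_adj ..).2 ⟨by simp, by rintro rfl; exact hab .rfl⟩))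
  have hxy' := ((hx.mono le_sup_left).trans hab').trans (hy.symm.mono le_sup_left)
  have := hT.connected.nonempty
  refine ⟨⟨fun u v ↦ pred_of_reachable (hT.connected u v) (fun c d hcd hc ↦ hc.trans ?_) .rfl⟩,
    (hT.isAcyclic.anti (deleteEdges_le _)).sup_edge_of_not_reachable hab⟩
  by_cases h : s(c, d) = s(x, y)
  · obtain ⟨rfl, rfl⟩ | ⟨rfl, rfl⟩ := Sym2.eq_iff.1 h
    exacts [hxy', hxy'.symm]
  · exact Adj.reachable (.inl ((deleteEdges_adj ..).2 ⟨hcd, h⟩))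

theorem eq_or_eq_of_adj_of_degree_le_two {v a b x : V} [Fintype (G.neighborSet v)]
    (hv : G.degree v ≤ 2) (hab : a ≠ b) (ha : G.Adj v a) (hb : G.Adj v b) (hx : G.Adj v x) :
    x = a ∨ x = b := by
  have hN : {a, b} = G.neighborFinset v :=
    eq_of_subset_of_card_le (by simp [insert_subset_iff, ha, hb]) (by simpa [card_pair hab])
  simpa [← hN] using (G.mem_neighborFinset v x).2 hx

variable [Fintype V]

theorem sum_ncard_supp (K : SimpleGraph V) :
    ∑ c : K.ConnectedComponent, c.supp.ncard = Fintype.card V := by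
  rw [← card_univ, card_eq_sum_card_fiberwise (f := K.connectedComponentMk) (t := univ) (by simp)]
  refine sum_congr rfl fun c _ ↦ ?_
  rw [Set.ncard_eq_toFinset_card']
  congr 1
  ext
  simp

theorem card_edgeFinset_eq_sum_connectedComponent (G : SimpleGraph V) :
    #G.edgeFinset = ∑ c : G.ConnectedComponent, #(G.induce c.supp).edgeFinset := by
  have hdeg (c : G.ConnectedComponent) (v : c.supp) :
      (G.induce c.supp).degree v = G.degree v :=
    degree_induce_of_neighborSet_subset fun w hw ↦ c.mem_supp_of_adj_mem_supp v.2 hw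
  have h2 : 2 * #G.edgeFinset = 2 * ∑ c : G.ConnectedComponent, #(G.induce c.supp).edgeFinset := by
    rw [mul_sum, ← sum_degrees_eq_twice_card_edges, ← sum_fiberwise univ G.connectedComponentMk]
    refine sum_congr rfl fun c _ ↦ ?_
    rw [← sum_degrees_eq_twice_card_edges, Fintype.sum_congr _ _ (hdeg c)]
    exact sum_subtype _ (by simp) _
  lia

theorem card_edgeFinset_add_card_connectedComponent (hK : K.IsAcyclic) :
    #K.edgeFinset + Nat.card K.ConnectedComponent = Fintype.card V := by
  rw [card_edgeFinset_eq_sum_connectedComponent, ← sum_ncard_supp K, Nat.card_eq_fintype_card,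
    ← card_univ, card_eq_sum_ones, ← sum_add_distrib]
  refine sum_congr rfl fun c _ ↦ ?_
  have hc : (K.induce c.supp).IsTree := hK.isTree_connectedComponent c
  rw [← Nat.card_coe_set_eq, Nat.card_eq_fintype_card, ← hc.card_edgeFinset]

theorem card_connectedComponent_deleteEdges (hT : T.IsTree) {S : Finset (Sym2 V)}
    (hS : S ⊆ T.edgeFinset) :
    Nat.card (T.deleteEdges (S : Set (Sym2 V))).ConnectedComponent = #S + 1 := by
  have hcard := card_edgeFinset_add_card_connectedComponent (hT.isAcyclic.anti (deleteEdges_le S))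
  rw [edgeFinset_deleteEdges, card_sdiff_of_subset hS] at hcard
  have := hT.card_edgeFinset
  have := card_le_card hS
  lia

theorem bijective_connectedComponentMk_deleteEdges (hT : T.IsTree) {S : Finset (Sym2 V)}
    (hS : S ⊆ T.edgeFinset) {ι : Type*} [Fintype ι] (hι : Fintype.card ι = #S + 1) {r : ι → V}
    (hr : ∀ e ∈ S, ∀ x ∈ e, ∃ i, (T.deleteEdges (S : Set (Sym2 V))).Reachable x (r i)) :
    Function.Bijective fun i ↦ (T.deleteEdges (S : Set (Sym2 V))).connectedComponentMk (r i) := by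
  rw [Nat.bijective_iff_surjective_and_card, card_connectedComponent_deleteEdges hT hS,
    Nat.card_eq_fintype_card]
  refine ⟨?_, hι⟩
  obtain ⟨i⟩ : Nonempty ι := Fintype.card_pos_iff.1 (by lia)
  rintro ⟨x⟩
  have hx := pred_of_reachable (hT.connected (r i) x)
    (P := fun x ↦ ∃ i, (T.deleteEdges (S : Set (Sym2 V))).Reachable (r i) x) ?_ ⟨i, .rfl⟩
  · exact hx.imp fun i hi ↦ ConnectedComponent.sound hi
  · rintro x y hxy ⟨i, hi⟩
    by_cases he : s(x, y) ∈ S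
    · exact (hr _ he y (Sym2.mem_mk_right x y)).imp fun j hj ↦ hj.symm
    · exact ⟨i, hi.trans (Adj.reachable (by simp [he, hxy]))⟩

theorem exists_adj_ne_of_degree_eq_one (hG : G.Connected) (hV : 3 ≤ Fintype.card V) {w v : V}
    (hw : G.degree w = 1) (hwv : G.Adj w v) : ∃ c, G.Adj v c ∧ c ≠ w := by
  by_contra! h
  obtain ⟨u, -, hu⟩ := degree_eq_one_iff_existsUnique_adj.1 hw
  have hall x : x ∈ ({w, v} : Finset V) := by
    refine pred_of_reachable (hG w x) (P := (· ∈ ({w, v} : Finset V)))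
      (fun a b hab ha ↦ ?_) (by simp)
    obtain rfl | rfl : a = w ∨ a = v := by simpa using ha
    · simp [hu b hab, hu v hwv]
    · simp [h b hab]
  have := card_le_two (a := w) (b := v)
  rw [eq_univ_of_forall hall, card_univ] at this
  lia

theorem exists_isPath_notMem_support (hG : G.Connected) {w v y : V} (hw : G.degree w = 1)
    (hwv : G.Adj w v) (hwy : w ≠ y) : ∃ q : G.Walk y v, q.IsPath ∧ w ∉ q.support := by
  obtain ⟨p, hp⟩ := (hG w y).exists_isPath
  obtain ⟨v', h, q, rfl⟩ := p.exists_eq_cons_of_ne hwy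
  obtain rfl := (degree_eq_one_iff_existsUnique_adj.1 hw).unique h hwv
  rw [Walk.cons_isPath_iff] at hp
  exact ⟨q.reverse, hp.1.reverse, by simpa using hp.2⟩

theorem degree_le_two_of_isTree (hT : T.IsTree) (hleaf : #{x | T.degree x = 1} ≤ 2) (v : V) :
    T.degree v ≤ 2 := by
  by_contra! hv
  obtain ⟨u, hu⟩ := (T.degree_pos_iff_exists_adj v).1 (by lia)
  have : Nontrivial V := ⟨v, u, hu.ne⟩
  have hpos x : 0 < T.degree x := hT.connected.preconnected.degree_pos_of_nontrivial x
  have hlt : ∑ _x : V, 2 < ∑ x, (T.degree x + if T.degree x = 1 then 1 else 0) :=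
    sum_lt_sum (fun x _ ↦ by grind) ⟨v, mem_univ v, by lia⟩
  rw [sum_add_distrib, sum_degrees_eq_twice_card_edges, ← card_filter, sum_const, card_univ,
    smul_eq_mul] at hlt
  have := hT.card_edgeFinset
  lia

theorem half_lt_fo_of_forall_eq_or_eq (hKG : K ≤ G) {c d : K.ConnectedComponent} (hcd : c ≠ d)
    (hcover : ∀ e, e = c ∨ e = d) (hc : c.supp.ncard % 4 = 3) (hV : Fintype.card V % 4 = 2) :
    Fintype.card V / 2 < fo G.lineGraph := by
  have hcompl : c.suppᶜ = d.supp := by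
    ext x
    have := hcover (K.connectedComponentMk x)
    simp only [Set.mem_compl_iff, ConnectedComponent.mem_supp_iff]
    grind
  refine half_lt_fo_of_connected_compl (connected_induce_supp_of_le hKG c) ?_ hc hV
  exact hcompl ▸ connected_induce_supp_of_le hKG d

theorem half_lt_fo_of_cyclic (hKG : K ≤ G) (c : Fin 4 ≃ K.ConnectedComponent)
    (hodd : ∀ i, Odd (c i).supp.ncard)
    (hadj : ∀ i, ∃ x ∈ (c i).supp, ∃ y ∈ (c (i + 1)).supp, G.Adj x y)
    (hV : Fintype.card V % 4 = 2) : Fintype.card V / 2 < fo G.lineGraph := by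
  obtain ⟨i, hi⟩ : ∃ i, (c i).supp.ncard % 4 = 3 := by
    -- Otherwise all four sizes are `1` mod `4` and the total is `0` mod `4`.
    by_contra! hne
    have hmod (i) : (c i).supp.ncard % 4 = 1 := by grind
    rw [← sum_ncard_supp K, ← c.sum_comp, sum_nat_mod, Fintype.sum_congr _ _ hmod] at hV
    simp only [sum_const, card_univ, Fintype.card_fin, smul_eq_mul, mul_one, Nat.mod_self,
      OfNat.zero_ne_ofNat] at hV
  have hcompl : (c i).suppᶜ = (c (i + 1)).supp ∪ ((c (i + 2)).supp ∪ (c (i + 3)).supp) := by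
    ext x
    obtain ⟨j, hj⟩ := c.surjective (K.connectedComponentMk x)
    simp only [Set.mem_compl_iff, ConnectedComponent.mem_supp_iff, ← hj, c.injective.eq_iff,
      Set.mem_union]
    lia
  have hconn j := (connected_induce_supp_of_le hKG (c j)).preconnected
  obtain ⟨x, hx, y, hy, hxy⟩ := hadj (i + 1)
  obtain ⟨z, hz, w, hw, hzw⟩ := hadj (i + 2)
  refine half_lt_fo_of_connected_compl (connected_induce_supp_of_le hKG (c i)) ?_ hi hV
  rw [hcompl]
  exact connected_induce_union (hconn _)
    (connected_induce_union (hconn _) (hconn _) hz (by convert hw using 3; lia) hzw).preconnected hx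
      (.inl (by convert hy using 3; lia)) hxy

end Tree

/-! ### Spanning trees containing a perfect matching -/

section SpanningTree

theorem IsMatchingInvolution.degree_eq_one_iff (hμ : IsMatchingInvolution T μ) {x : V}
    [Fintype (T.neighborSet x)] : T.degree x = 1 ↔ ∀ z, T.Adj x z → z = μ x := by
  rw [degree_eq_one_iff_existsUnique_adj]
  exact ⟨fun h z hz ↦ h.unique hz (hμ.adj x), fun h ↦ ⟨μ x, hμ.adj x, h⟩⟩

theorem IsMatchingInvolution.exists_isTree_le (hμ : IsMatchingInvolution G μ) (hG : G.Connected) :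
    ∃ T ≤ G, T.IsTree ∧ IsMatchingInvolution T μ := by
  let M : SimpleGraph V :=
    { Adj u v := μ u = v
      symm := ⟨fun u _ h ↦ h ▸ hμ.involutive u⟩
      loopless := ⟨fun v h ↦ (hμ.adj v).ne' h⟩ }
  have hM : M.IsAcyclic := by
    intro v c hc
    have hsnd : μ v = c.snd := c.adj_snd hc.not_nil
    have hpen : μ v = c.penultimate := (c.adj_penultimate hc.not_nil).symm
    exact hc.snd_ne_penultimate (hsnd.symm.trans hpen)
  have hMG : M ≤ G := fun u v h ↦ h ▸ hμ.adj u
  obtain ⟨T, hMT, hTG, hT⟩ := hG.exists_isTree_le_of_le_of_isAcyclic hMG hM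
  exact ⟨T, hTG, hT, hμ.involutive, fun v ↦ hMT rfl⟩

theorem IsMatchingInvolution.even_ncard [Finite V] (hμ : IsMatchingInvolution G μ) {s : Set V}
    (hs : ∀ x ∈ s, μ x ∈ s) : Even s.ncard := by
  have := Fintype.ofFinite V
  rw [Set.ncard_eq_toFinset_card', ← ZMod.natCast_eq_zero_iff_even, card_eq_sum_ones, Nat.cast_sum]
  exact sum_involution (fun x _ ↦ μ x) (fun _ _ ↦ by decide) (fun x _ _ ↦ (hμ.adj x).ne')
    (fun x hx ↦ by simpa using hs x (by simpa using hx)) fun x _ ↦ hμ.involutive x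

theorem IsMatchingInvolution.odd_ncard [Finite V] (hμ : IsMatchingInvolution G μ) {s : Set V}
    {r : V} (hr : r ∈ s) (hμr : μ r ∉ s) (hs : ∀ x ∈ s, x ≠ r → μ x ∈ s) : Odd s.ncard := by
  rw [← Set.ncard_sdiff_singleton_add_one hr]
  refine Even.add_one (hμ.even_ncard ?_)
  rintro x ⟨hx, hxr⟩
  refine ⟨hs x hx hxr, ?_⟩
  rintro rfl
  exact hμr (by rwa [hμ.involutive x])

variable [Fintype V]

theorem IsMatchingInvolution.two_mul_card_eq (hμ : IsMatchingInvolution T μ) {B : Finset V}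
    (hB : T.IsBipartiteWith B ↑Bᶜ) : 2 * #B = Fintype.card V := by
  have h : #B = #Bᶜ := card_nbij' μ μ (fun x hx ↦ hB.mem_of_mem_adj hx (hμ.adj x))
    (fun x hx ↦ hB.symm.mem_of_mem_adj hx (hμ.adj x)) (fun x _ ↦ hμ.involutive x)
    fun x _ ↦ hμ.involutive x
  rw [← card_add_card_compl B]
  lia

theorem half_lt_fo_of_cyclic_of_isMatchingInvolution (hμ : IsMatchingInvolution G μ) (hKG : K ≤ G)
    {r : Fin 4 → V} (hr : Function.Bijective fun i ↦ K.connectedComponentMk (r i))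
    (hrμ : ∀ i, ¬K.Reachable (μ (r i)) (r i)) (hKμ : ∀ x ∉ Set.range r, K.Adj x (μ x))
    (hadj : ∀ i, ∃ x y, K.Reachable x (r i) ∧ K.Reachable y (r (i + 1)) ∧ G.Adj x y)
    (hV : Fintype.card V % 4 = 2) : Fintype.card V / 2 < fo G.lineGraph := by
  refine half_lt_fo_of_cyclic hKG (.ofBijective _ hr) (fun i ↦ ?_) (fun i ↦ ?_) hV
  · refine hμ.odd_ncard (r := r i) rfl (fun h ↦ hrμ i (ConnectedComponent.exact h)) ?_
    intro x hx hxr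
    refine ConnectedComponent.mem_supp_of_adj_mem_supp _ hx (hKμ x ?_)
    rintro ⟨j, rfl⟩
    exact hxr (congrArg r (hr.injective hx))
  · obtain ⟨x, y, hx, hy, hxy⟩ := hadj i
    exact ⟨x, ConnectedComponent.sound hx, y, ConnectedComponent.sound hy, hxy⟩

/- Deleting the three edges cuts `T` into the parts of `a`, `μ a`, `μ w` and `w`. The edges
`s(a, μ a)`, `s(μ a, b)`, `s(μ w, w)` and `s(w, y)` join them in a cycle, in this order, and each
part has odd size because its representative is its only vertex whose partner lies outside. -/
theorem half_lt_fo_of_deleteEdges (hTG : T ≤ G) (hT : T.IsTree) (hμ : IsMatchingInvolution T μ)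
    (hV : Fintype.card V % 4 = 2) {a b w y : V} (hw : [a, μ a, μ w, w].Nodup)
    (hb : T.Adj (μ a) b) (hba : b ≠ a) (hwy : G.Adj w y)
    (hK : K = T.deleteEdges {s(a, μ a), s(μ a, b), s(w, μ w)})
    (hbw : K.Reachable b (μ w)) (hya : K.Reachable y a) :
    Fintype.card V / 2 < fo G.lineGraph := by
  have hinv := hμ.involutive
  let S : Finset (Sym2 V) := {s(a, μ a), s(μ a, b), s(w, μ w)}
  let r : Fin 4 → V := ![a, μ a, μ w, w]
  obtain rfl : K = T.deleteEdges (S : Set (Sym2 V)) := by simp [hK, S]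
  have hScard : #S = 3 := card_eq_three.2 ⟨_, _, _, by grind, by grind, by grind, rfl⟩
  have hr : Function.Bijective fun i ↦ (T.deleteEdges S).connectedComponentMk (r i) := by
    refine bijective_connectedComponentMk_deleteEdges hT
      (by simp [S, insert_subset_iff, hb, hμ.adj]) (by simp [hScard]) ?_
    simp only [S, r, mem_insert, mem_singleton, forall_eq_or_imp, forall_eq, Sym2.ball]
    exact ⟨⟨⟨0, .rfl⟩, 1, .rfl⟩, ⟨⟨1, .rfl⟩, 2, hbw⟩, ⟨3, .rfl⟩, 2, .rfl⟩
  have hne {i j} (hij : i ≠ j) : ¬(T.deleteEdges S).Reachable (r i) (r j) := fun h ↦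
    hij (hr.injective (ConnectedComponent.sound h))
  refine half_lt_fo_of_cyclic_of_isMatchingInvolution ⟨hinv, fun v ↦ hTG (hμ.adj v)⟩
    ((deleteEdges_le _).trans hTG) hr (fun i ↦ ?_) (fun x hx ↦ ?_) (fun i ↦ ?_) hV
  · fin_cases i
    · exact hne (i := 1) (j := 0) (by decide)
    · simpa [r, hinv a] using hne (i := 0) (j := 1) (by decide)
    · simpa [r, hinv w] using hne (i := 3) (j := 2) (by decide)
    · exact hne (i := 2) (j := 3) (by decide)
  · have hx' : x ∉ [a, μ a, μ w, w] := mt (List.mem_ofFn (f := r)).1 hx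
    have := hinv.injective (a₁ := x) (a₂ := a)
    exact (deleteEdges_adj ..).2 ⟨hμ.adj x, by simp [S]; grind⟩
  · fin_cases i
    · exact ⟨a, μ a, .rfl, .rfl, hTG (hμ.adj a)⟩
    · exact ⟨μ a, b, .rfl, hbw, hTG hb⟩
    · exact ⟨μ w, w, .rfl, .rfl, hTG (hμ.adj w).symm⟩
    · exact ⟨w, y, .rfl, hya, hwy⟩

theorem half_lt_fo_of_walk (hTG : T ≤ G) (hT : T.IsTree) (hμ : IsMatchingInvolution T μ)
    (hV : Fintype.card V % 4 = 2) {a b w y : V} (hw : T.degree w = 1) (hwy : G.Adj w y)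
    (hya : y = a ∨ T.Adj y a ∧ y ≠ μ a) (hb : T.Adj (μ a) b) (hba : b ≠ a)
    (q : T.Walk b (μ w)) (haq : μ a ∉ q.support) (hwq : w ∉ q.support) :
    Fintype.card V / 2 < fo G.lineGraph := by
  have haμ := (hμ.adj a).ne
  have hwμ := (hμ.adj w).ne
  have hμb := hb.ne
  have hμaw' : μ a ≠ μ w := fun h ↦ haq (h.symm ▸ q.end_mem_support)
  have haw : a ≠ w := mt (congrArg μ) hμaw'
  have hμaw : μ a ≠ w := fun h ↦ hba <| by
    rw [hμ.degree_eq_one_iff.1 hw b (h ▸ hb), ← h, hμ.involutive a]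
  have haw' : a ≠ μ w := fun h ↦ hμaw (by rw [h, hμ.involutive w])
  refine half_lt_fo_of_deleteEdges hTG hT hμ hV (by grind) hb hba hwy rfl
    ⟨q.toDeleteEdges _ fun e he ↦ ?_⟩ ?_
  · rintro (rfl | rfl | rfl)
    · exact haq (q.snd_mem_support_of_mem_edges he)
    · exact haq (q.fst_mem_support_of_mem_edges he)
    · exact hwq (q.fst_mem_support_of_mem_edges he)
  · obtain rfl | ⟨h, hne⟩ := hya
    · rfl
    · have := h.ne
      exact Adj.reachable ((deleteEdges_adj ..).2 ⟨h, by simp; grind⟩)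

/- Exchanging `s(w, μ w)` for `s(w, y)` moves `w` to the other side of the bipartition of `T`, which
was balanced; one side then has `card V / 2 + 1` vertices, an even number. -/
theorem half_lt_fo_of_adj_of_adj (hTG : T ≤ G) (hT : T.IsTree) (hμ : IsMatchingInvolution T μ)
    (hV : Fintype.card V % 4 = 2) {w y : V} (hw : T.degree w = 1) (hwy : G.Adj w y)
    (hy : T.Adj (μ w) y) : Fintype.card V / 2 < fo G.lineGraph := by
  have hH := isTree_deleteEdges_sup_edge hT (hμ.adj w) (a := w) (b := y) .rfl
    (Adj.reachable (by simp [hy]; grind [hwy.ne]))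
  have hHG : T.deleteEdges {s(w, μ w)} ⊔ edge w y ≤ G :=
    sup_le ((deleteEdges_le _).trans hTG) ((edge_le_iff _).2 (.inr hwy))
  obtain ⟨B, hB, hwB⟩ : ∃ B : Finset V, T.IsBipartiteWith B ↑Bᶜ ∧ w ∉ B := by
    obtain ⟨B, hB⟩ := exists_isBipartiteWith_compl hT.isBipartite
    by_cases hwB : w ∈ B
    · exact ⟨Bᶜ, by simpa using hB.symm, by simpa⟩
    · exact ⟨B, hB, hwB⟩
  have hB' : (T.deleteEdges {s(w, μ w)} ⊔ edge w y).IsBipartiteWith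
      ↑(insert w B) ↑(insert w B)ᶜ := by
    have hleaf := hμ.degree_eq_one_iff.1 hw
    have hyB : y ∉ B := by
      simpa using hB.mem_of_mem_adj (hB.symm.mem_of_mem_adj (by simpa using hwB) (hμ.adj w)) hy
    refine ⟨disjoint_coe.2 disjoint_compl_right, fun a b hab ↦ ?_⟩
    simp only [sup_adj, deleteEdges_adj, edge_adj, Set.mem_singleton_iff, mem_coe, mem_insert,
      mem_compl] at hab ⊢
    have := T.adj_comm a b
    have := hB.mem_of_adj (v := a) (w := b)
    simp only [mem_coe, mem_compl] at this
    grind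
  have hcard := hμ.two_mul_card_eq hB
  have := card_le_fo_of_isBipartiteWith hHG hH.connected hB' subset_rfl
    (by rw [card_insert_of_notMem hwB]; grind) (by grind)
  rw [card_insert_of_notMem hwB] at this
  lia

/- Exchanging `s(y, z)` for `s(y, w)` removes the leaf `w`. It creates no leaf, since `y` keeps
`μ y` and gains `w`, while `z` keeps `μ z` and `t`. -/
theorem exists_isTree_card_leaves_lt (hTG : T ≤ G) (hT : T.IsTree) (hμ : IsMatchingInvolution T μ)
    {w y z t : V} (hw : T.degree w = 1) (hwy : G.Adj w y) (hyw : y ≠ μ w) (hyz : T.Adj y z)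
    (hzy : z ≠ μ y) (hzt : T.Adj z t) (hty : t ≠ y) (htz : t ≠ μ z)
    (hzw : (T.deleteEdges {s(y, z)}).Reachable z w) :
    ∃ T' ≤ G, T'.IsTree ∧ IsMatchingInvolution T' μ ∧
      #{x | T'.degree x = 1} < #{x | T.degree x = 1} := by
  have hinv := hμ.involutive
  obtain ⟨T', hT'⟩ : ∃ T', T' = T.deleteEdges {s(y, z)} ⊔ edge y w := ⟨_, rfl⟩
  have hT'adj {a b} (h : T.Adj a b) (hab : s(a, b) ≠ s(y, z)) : T'.Adj a b :=
    hT' ▸ .inl ((deleteEdges_adj ..).2 ⟨h, hab⟩)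
  have hT'yw : T'.Adj y w := hT' ▸ .inr ((edge_adj ..).2 ⟨by simp, hwy.ne'⟩)
  have hμ' : IsMatchingInvolution T' μ := ⟨hinv, fun x ↦ hT'adj (hμ.adj x) (by grind [hinv x])⟩
  have hsub (x : V) (hx : T'.degree x = 1) : T.degree x = 1 := by
    have hleaf := hμ'.degree_eq_one_iff.1 hx
    refine hμ.degree_eq_one_iff.2 fun u hu ↦ ?_
    by_cases h : s(x, u) = s(y, z)
    · obtain ⟨rfl, rfl⟩ | ⟨rfl, rfl⟩ := Sym2.eq_iff.1 h
      · exact (hyw (by rw [hleaf w hT'yw, hinv])).elim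
      · exact (htz (hleaf t (hT'adj hzt (by grind)))).elim
    · exact hleaf u (hT'adj hu h)
  have hw' : T'.degree w ≠ 1 := fun h ↦ hyw (hμ'.degree_eq_one_iff.1 h y hT'yw.symm)
  have hT'G : T' ≤ G :=
    hT' ▸ sup_le ((deleteEdges_le _).trans hTG) ((edge_le_iff _).2 (.inr hwy.symm))
  have hT'tree : T'.IsTree := hT' ▸ isTree_deleteEdges_sup_edge hT hyz .rfl hzw
  refine ⟨T', hT'G, hT'tree, hμ', card_lt_card ?_⟩
  exact (ssubset_iff_of_subset (monotone_filter_right univ fun x _ ↦ hsub x)).2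
    ⟨w, by simpa using hw, by simpa using hw'⟩

theorem half_lt_fo_or_exists_isTree_card_leaves_lt (hTG : T ≤ G) (hT : T.IsTree)
    (hμ : IsMatchingInvolution T μ) (hV : Fintype.card V % 4 = 2) {w y : V} (hw : T.degree w = 1)
    (hwy : G.Adj w y) (hyw : y ≠ μ w) :
    Fintype.card V / 2 < fo G.lineGraph ∨ ∃ T' ≤ G, T'.IsTree ∧ IsMatchingInvolution T' μ ∧
      #{x | T'.degree x = 1} < #{x | T.degree x = 1} := by
  obtain ⟨q, hq, hwq⟩ :=
    exists_isPath_notMem_support hT.connected hw (hμ.adj w) hwy.ne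
  cases q with
  | nil => exact (hyw rfl).elim
  | @cons _ z _ hyz q =>
  cases q with
  | nil => exact .inl (half_lt_fo_of_adj_of_adj hTG hT hμ hV hw hwy hyz.symm)
  | @cons _ t _ hzt q =>
    simp only [Walk.cons_isPath_iff, Walk.support_cons, List.mem_cons, not_or] at hq hwq
    obtain ⟨⟨hq, hzq⟩, hyz', hyq⟩ := hq
    have hzw : z ≠ w := fun h ↦ hwq.2.1 h.symm
    have hty : t ≠ y := fun h ↦ hyq (h ▸ q.start_mem_support)
    by_cases hzy : z = μ y
    · subst hzy
      exact .inl (half_lt_fo_of_walk hTG hT hμ hV hw hwy (.inl rfl) hzt hty q hzq hwq.2.2)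
    by_cases htz : t = μ z
    · subst htz
      obtain ⟨u, htu, q, rfl⟩ := q.exists_eq_cons_of_ne (hμ.involutive.injective.ne hzw)
      simp only [Walk.cons_isPath_iff, Walk.support_cons, List.mem_cons, not_or] at hq hzq hwq
      exact .inl (half_lt_fo_of_walk hTG hT hμ hV hw hwy (.inr ⟨hyz, hty.symm⟩) htu
        (fun h ↦ hzq.2 (h ▸ q.start_mem_support)) q hq.2 hwq.2.2.2)
    refine .inr (exists_isTree_card_leaves_lt hTG hT hμ hw hwy hyw hyz hzy hzt hty htz ?_)
    refine .trans ⟨(q.cons hzt).toDeleteEdges _ fun e he ↦ ?_⟩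
      (Adj.reachable ((deleteEdges_adj ..).2 ⟨(hμ.adj w).symm, ?_⟩))
    · rintro rfl
      have := (q.cons hzt).fst_mem_support_of_mem_edges he
      grind [Walk.support_cons]
    · grind [hwy.ne]

theorem supp_connectedComponentMk_deleteEdges (hμ : IsMatchingInvolution T μ)
    (hdeg : ∀ v, T.degree v ≤ 2) {w c : V} (hw : T.degree w = 1) (hc : T.Adj (μ w) c)
    (hcw : c ≠ w) :
    ((T.deleteEdges {s(c, μ c)}).connectedComponentMk c).supp = {w, μ w, c} := by
  have hinv := hμ.involutive
  have hne : μ w ≠ μ c := hinv.injective.ne hcw.symm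
  have hcμc := (hμ.adj c).ne
  have hcμw := hc.ne'
  have hKadj {x z} : (T.deleteEdges {s(c, μ c)}).Adj x z ↔ T.Adj x z ∧ s(x, z) ≠ s(c, μ c) := by
    simp
  ext x
  simp only [ConnectedComponent.mem_supp_iff, ConnectedComponent.eq, Set.mem_insert_iff,
    Set.mem_singleton_iff]
  constructor
  · intro hx
    refine pred_of_reachable hx.symm (P := fun x ↦ x = w ∨ x = μ w ∨ x = c) ?_ (by simp)
    rintro a b hab (rfl | rfl | rfl)
    · exact .inr (.inl (hμ.degree_eq_one_iff.1 hw b (hKadj.1 hab).1))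
    · have := eq_or_eq_of_adj_of_degree_le_two (hdeg _) hcw hc (hμ.adj w).symm (hKadj.1 hab).1
      tauto
    · have := eq_or_eq_of_adj_of_degree_le_two (hdeg _) hne hc.symm (hμ.adj a) (hKadj.1 hab).1
      grind
  · have hcμw' := Adj.reachable (hKadj.2 ⟨hc, by grind⟩)
    rintro (rfl | rfl | rfl)
    · exact (Adj.reachable (hKadj.2 ⟨hμ.adj x, by grind⟩)).trans hcμw'
    · exact hcμw'
    · rfl

theorem half_lt_fo_of_degree_le_two (hTG : T ≤ G) (hT : T.IsTree) (hμ : IsMatchingInvolution T μ)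
    (hV : Fintype.card V % 4 = 2) (hV' : 3 ≤ Fintype.card V) (hdeg : ∀ v, T.degree v ≤ 2) :
    Fintype.card V / 2 < fo G.lineGraph := by
  have : Nontrivial V := Fintype.one_lt_card_iff_nontrivial.1 (by lia)
  obtain ⟨w, hw⟩ := hT.exists_vert_degree_one_of_nontrivial
  obtain ⟨c, hc, hcw⟩ := exists_adj_ne_of_degree_eq_one hT.connected hV' hw (hμ.adj w)
  let K := T.deleteEdges {s(c, μ c)}
  have hr : Function.Bijective fun i ↦ K.connectedComponentMk (![c, μ c] i) := by
    convert bijective_connectedComponentMk_deleteEdges hT (S := {s(c, μ c)}) (r := ![c, μ c])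
      (by simp [hμ.adj]) (by simp) (by simp) <;> simp
  have hsupp : (K.connectedComponentMk c).supp.ncard = 3 :=
    Set.ncard_eq_three.2 ⟨w, μ w, c, (hμ.adj w).ne, hcw.symm, hc.ne,
      supp_connectedComponentMk_deleteEdges hμ hdeg hw hc hcw⟩
  refine half_lt_fo_of_forall_eq_or_eq ((deleteEdges_le _).trans hTG)
    (c := K.connectedComponentMk c) (hr.injective.ne (zero_ne_one (α := Fin 2))) (fun e ↦ ?_)
    (by simp [hsupp]) hV
  obtain ⟨i, rfl⟩ := hr.surjective e
  fin_cases i <;> simp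

theorem half_lt_fo_or_three_le_card_leaves (hG : G.Connected) (hμ : IsMatchingInvolution G μ)
    (hV : Fintype.card V % 4 = 2) (hV' : 3 ≤ Fintype.card V) :
    Fintype.card V / 2 < fo G.lineGraph ∨ 3 ≤ #{x | G.degree x = 1} := by
  by_contra! h
  obtain ⟨hfo, hleaf⟩ := h
  obtain ⟨T, ⟨hTG, hT, hμT⟩, hmin⟩ := exists_minimalFor_of_wellFoundedLT
    (fun T ↦ T ≤ G ∧ T.IsTree ∧ IsMatchingInvolution T μ) (fun T ↦ #{x | T.degree x = 1})
    (hμ.exists_isTree_le hG)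
  have hsub (w : V) (hw : T.degree w = 1) : G.degree w = 1 := by
    refine hμ.degree_eq_one_iff.2 fun y hwy ↦ ?_
    by_contra hyw
    obtain h | ⟨T', hT'G, hT', hμT', hlt⟩ :=
      half_lt_fo_or_exists_isTree_card_leaves_lt hTG hT hμT hV hw hwy hyw
    · exact hfo.not_gt h
    · exact (hmin ⟨hT'G, hT', hμT'⟩ hlt.le).not_gt hlt
  have hleaf' : #{x | T.degree x = 1} ≤ 2 :=
    (card_le_card (monotone_filter_right univ fun w _ ↦ hsub w)).trans (Nat.le_of_lt_succ hleaf)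
  have hdeg := degree_le_two_of_isTree hT hleaf'
  exact hfo.not_gt (half_lt_fo_of_degree_le_two hTG hT hμT hV hV' hdeg)

theorem card_edgeFinset_le_mul_fo_of_connected (hG : G.Connected) (hV : 3 ≤ Fintype.card V)
    (hD : G.lineGraph.Colorable D) : #G.edgeFinset ≤ D * fo G.lineGraph := by
  have hE := card_edgeFinset_le_mul hD
  have hfo := two_mul_le_fo hG
  by_cases hV4 : Fintype.card V % 4 = 2
  · by_contra! hlt
    obtain ⟨k, hk⟩ : ∃ k, Fintype.card V = 2 * (2 * k + 1) := ⟨Fintype.card V / 4, by lia⟩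
    have hfo' : 2 * k ≤ fo G.lineGraph := by lia
    obtain ⟨μ, hμ⟩ := exists_isMatchingInvolution_of_lt hD hk
      ((Nat.mul_le_mul_left D hfo').trans_lt hlt)
    obtain h | h := half_lt_fo_or_three_le_card_leaves hG hμ hV4 hV
    · exact hlt.not_ge (hE.trans (Nat.mul_le_mul_left D h.le))
    · have h2 := two_mul_card_edgeFinset_le hG (degree_le_of_colorable_lineGraph hD) h
      rw [show Fintype.card V - 2 = 2 * (2 * k) by lia] at h2
      have := Nat.mul_le_mul_left D hfo'
      lia
  · exact hE.trans (Nat.mul_le_mul_left D (by lia))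

theorem card_edgeFinset_le_mul_fo (hcomp : ∀ c : G.ConnectedComponent, 3 ≤ c.supp.ncard)
    (hD : G.lineGraph.Colorable D) : #G.edgeFinset ≤ D * fo G.lineGraph := by
  have hD' (c : G.ConnectedComponent) : (G.induce c.supp).lineGraph.Colorable D :=
    hD.of_hom (Embedding.induce (G := G) c.supp).toCopy.toLineGraphEmbedding.toHom
  have hV (c : G.ConnectedComponent) : 3 ≤ Fintype.card c.supp := by
    rw [← Nat.card_eq_fintype_card, Nat.card_coe_set_eq]
    exact hcomp c
  calc #G.edgeFinset = ∑ c : G.ConnectedComponent, #(G.induce c.supp).edgeFinset :=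
        card_edgeFinset_eq_sum_connectedComponent G
    _ ≤ ∑ c : G.ConnectedComponent, D * fo (G.induce c.supp).lineGraph :=
        sum_le_sum fun c _ ↦ card_edgeFinset_le_mul_fo_of_connected
          c.connected_toSimpleGraph (hV c) (hD' c)
    _ ≤ D * fo G.lineGraph := by
        rw [← mul_sum]
        refine Nat.mul_le_mul_left D ?_
        convert sum_fo_lineGraph_induce_le
          (s := fun c : G.ConnectedComponent ↦ c.supp) (pairwise_disjoint_supp_connectedComponent G)

end SpanningTree

end OddLine

/-- If `G` has `m ≥ 2` edges and every connected component of `G` has at least 3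
vertices, then `χ(L(G)) · f_o(L(G)) ≥ m`, i.e. `f_o(L(G)) ≥ m / χ(L(G))`. -/
theorem fo_lineGraph_ge_edges_div_chromatic {V : Type*} [Fintype V] (G : SimpleGraph V)
    (hm : 2 ≤ G.edgeFinset.card)
    (hcomp : ∀ c : G.ConnectedComponent, 3 ≤ c.supp.ncard) :
    (G.edgeFinset.card : ℕ∞) ≤ G.lineGraph.chromaticNumber * fo G.lineGraph := by
  obtain ⟨D, hD⟩ := ENat.ne_top_iff_exists.1
    (SimpleGraph.chromaticNumber_ne_top_iff_exists.2 ⟨_, G.lineGraph.colorable_of_fintype⟩)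
  have hcol := SimpleGraph.chromaticNumber_le_iff_colorable.1 hD.ge
  rw [← hD]
  exact_mod_cast OddLine.card_edgeFinset_le_mul_fo hcomp hcol
end

section
/- If G is a cubic (3-regular) finite simple graph of order n, then f_o(L(G)) ≥ n/2; equivalently, 2 · f_o(L(G)) ≥ n. -/
/-!
A spanning subgraph `H ≤ G` in which the two ends of every edge have degrees of different parity
has an edge set that induces an odd subgraph of `L(G)`, since the edge `ab` meets
`deg a + deg b - 2` others. So it suffices to find such an `H` with `2 |E(H)| ≥ |Z|` inside every
connected component `Z` of `G`.

A connected set `S` whose root `v` has at most two neighbours in `S` is handled by recursion on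
the branches at `v`. To glue branches, `v` may carry a stub: a half-edge which counts towards the
degree of `v` and is later completed to an edge. The recursion yields `|S| - 2 |E(H)| ≤ 2`.

In a cubic component `Z` some path `a - b - c` has a connected complement. Its two edges lower the
deficit `|Z| - 2 |E(H)|` to at most `1`, and `|Z|` is even by the handshake lemma.
-/

open scoped Classical

namespace OddLineGraph

open SimpleGraph

variable {V : Type*} {G : SimpleGraph V}

section LineGraph

lemma card_le_fo [Fintype V] {s : Finset V} (hs : ∀ v ∈ s, Odd (s.filter (G.Adj v)).card) :
    s.card ≤ fo G := by
  refine le_csSup ⟨Fintype.card V, ?_⟩ ⟨s, hs, rfl⟩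
  rintro _ ⟨r, -, rfl⟩
  exact r.card_le_univ

variable [Fintype V] {H : SimpleGraph V}

lemma card_incidenceFinset_union_erase_add_two {a b : V} (hab : H.Adj a b) :
    ((H.incidenceFinset a ∪ H.incidenceFinset b).erase s(a, b)).card + 2 =
      H.degree a + H.degree b := by
  have hinter : H.incidenceFinset a ∩ H.incidenceFinset b = {s(a, b)} := by
    simpa [← Finset.coe_inj] using H.incidenceSet_inter_incidenceSet_of_adj hab
  have hmem : s(a, b) ∈ H.incidenceFinset a ∪ H.incidenceFinset b := by
    simp [hab]
  have hunion := Finset.card_union_add_card_inter (H.incidenceFinset a) (H.incidenceFinset b)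
  rw [hinter, Finset.card_singleton, card_incidenceFinset_eq_degree,
    card_incidenceFinset_eq_degree, ← Finset.card_erase_add_one hmem] at hunion
  exact hunion

lemma map_filter_lineGraph_adj (hHG : H ≤ G) {a b : V} (hab : G.Adj a b) :
    ((H.edgeFinset.subtype (· ∈ G.edgeSet)).filter
        (G.lineGraph.Adj ⟨s(a, b), hab⟩)).map (Function.Embedding.subtype _) =
      (H.incidenceFinset a ∪ H.incidenceFinset b).erase s(a, b) := by
  ext e
  have hmem : e ∈ H.edgeSet → e ∈ G.edgeSet := fun he => edgeSet_mono hHG he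
  simp only [Finset.mem_map, Finset.mem_filter, Finset.mem_subtype, mem_edgeFinset,
    lineGraph_adj_iff_exists, Function.Embedding.coe_subtype, Finset.mem_erase, Finset.mem_union,
    mem_incidenceFinset, incidenceSet, Set.mem_ofPred_eq, Subtype.exists, Sym2.mem_iff, ne_eq]
  grind

theorem ncard_edgeSet_le_fo_lineGraph [Fintype G.edgeSet] (hHG : H ≤ G)
    (hodd : ∀ a b, H.Adj a b → Odd (H.degree a + H.degree b)) :
    H.edgeSet.ncard ≤ fo G.lineGraph := by
  have hcard : (H.edgeFinset.subtype (· ∈ G.edgeSet)).card = H.edgeSet.ncard := by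
    rw [Set.ncard_eq_toFinset_card', ← edgeFinset, Finset.card_subtype, Finset.filter_true_of_mem]
    exact fun e he => edgeSet_mono hHG (mem_edgeFinset.1 he)
  rw [← hcard]
  refine card_le_fo ?_
  rintro ⟨⟨a, b⟩, hG⟩ he
  have hab : H.Adj a b := by simpa using he
  have hdeg := card_incidenceFinset_union_erase_add_two hab
  rw [← map_filter_lineGraph_adj hHG (hHG hab), Finset.card_map] at hdeg
  have := hodd a b hab
  rw [← hdeg] at this
  simpa [Nat.odd_add] using this

end LineGraph

section Degrees

variable {H K : SimpleGraph V} {v c : V}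

lemma degree_sup_of_disjoint (h : Disjoint H K) (x : V) [Fintype (H.neighborSet x)]
    [Fintype (K.neighborSet x)] [Fintype ((H ⊔ K).neighborSet x)] :
    (H ⊔ K).degree x = H.degree x + K.degree x := by
  rw [← card_neighborFinset_eq_degree, neighborFinset_sup_of_disjoint x h, Finset.card_disjUnion]
  simp only [card_neighborFinset_eq_degree]

lemma degree_edge (hvc : v ≠ c) (x : V) [Fintype ((edge v c).neighborSet x)] :
    (edge v c).degree x = if x = v ∨ x = c then 1 else 0 := by
  have hN : (edge v c).neighborFinset x = if x = v then {c} else if x = c then {v} else ∅ := by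
    ext y
    grind [mem_neighborFinset]
  grind [card_neighborFinset_eq_degree]

end Degrees

section Parity

variable [Fintype V] {S T : Set V} {σ τ : V → ZMod 2} {H K : SimpleGraph V} {v c : V}

/-- The degree modulo `2` of a vertex in `H`, where `σ` records the parity of the number of stubs
(half-edges not belonging to `H`) at each vertex. -/
noncomputable def stubParity (H : SimpleGraph V) (σ : V → ZMod 2) : V → ZMod 2 :=
  fun x => H.degree x + σ x

/-- `H` is a subgraph of `G` inside `S` in which adjacent vertices have degrees of different parity,
stubs included.  All stubs are at vertices of `S`. -/
structure IsParityAlternating (G : SimpleGraph V) (S : Set V) (σ : V → ZMod 2)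
    (H : SimpleGraph V) : Prop where
  le : H ≤ G
  support_subset : H.support ⊆ S
  stubs_eq_zero : ∀ x ∉ S, σ x = 0
  parity_ne : ∀ a b, H.Adj a b → stubParity H σ a ≠ stubParity H σ b

lemma stubParity_sup (h : Disjoint H K) :
    stubParity (H ⊔ K) (σ + τ) = stubParity H σ + stubParity K τ := by
  ext x
  simp only [stubParity, degree_sup_of_disjoint h, Pi.add_apply, Nat.cast_add]
  ring

lemma stubParity_edge (hvc : v ≠ c) :
    stubParity (edge v c) 0 = Pi.single v 1 + Pi.single c 1 := by
  ext x
  simp only [stubParity, degree_edge hvc, Pi.zero_apply, add_zero, Pi.add_apply, Pi.single_apply]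
  split_ifs <;> simp_all

lemma stubParity_sup_edge (hvc : v ≠ c) (hadj : ¬H.Adj v c) :
    stubParity (H ⊔ edge v c) σ = stubParity H (σ + Pi.single v 1 + Pi.single c 1) := by
  rw [← add_zero σ, stubParity_sup ((disjoint_edge H).2 hadj), stubParity_edge hvc]
  ext x
  simp only [stubParity, Pi.add_apply, Pi.zero_apply]
  ring

namespace IsParityAlternating

lemma bot (hσ : ∀ x ∉ S, σ x = 0) : IsParityAlternating G S σ ⊥ :=
  ⟨bot_le, by simp, hσ, by simp⟩

lemma stubParity_eq_zero (h : IsParityAlternating G S σ H) {x : V} (hx : x ∉ S) :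
    stubParity H σ x = 0 := by
  have hdeg : H.degree x = 0 := by
    rw [degree_eq_zero_iff_notMem_support]
    exact fun hx' => hx (h.support_subset hx')
  simp [stubParity, hdeg, h.stubs_eq_zero x hx]

lemma mem_of_adj (h : IsParityAlternating G S σ H) {a b : V} (hab : H.Adj a b) : a ∈ S :=
  h.support_subset ⟨b, hab⟩

lemma disjoint (hH : IsParityAlternating G S σ H) (hK : IsParityAlternating G T τ K)
    (hST : Disjoint S T) : Disjoint H K := by
  refine disjoint_left.2 fun a b hab hab' => ?_
  exact Set.disjoint_left.1 hST (hH.mem_of_adj hab) (hK.mem_of_adj hab')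

lemma sup (hH : IsParityAlternating G S σ H) (hK : IsParityAlternating G T τ K)
    (hST : Disjoint S T) : IsParityAlternating G (S ∪ T) (σ + τ) (H ⊔ K) where
  le := sup_le hH.le hK.le
  support_subset := by
    rintro a ⟨b, hab | hab⟩
    exacts [Or.inl (hH.mem_of_adj hab), Or.inr (hK.mem_of_adj hab)]
  stubs_eq_zero x hx := by
    simp only [Set.mem_union, not_or] at hx
    simp [hH.stubs_eq_zero x hx.1, hK.stubs_eq_zero x hx.2]
  parity_ne a b hab := by
    simp only [stubParity_sup (hH.disjoint hK hST), Pi.add_apply]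
    rcases hab with hab | hab
    · rw [hK.stubParity_eq_zero (hST.notMem_of_mem_left (hH.mem_of_adj hab)),
        hK.stubParity_eq_zero (hST.notMem_of_mem_left (hH.mem_of_adj hab.symm))]
      simpa using hH.parity_ne a b hab
    · rw [hH.stubParity_eq_zero (hST.notMem_of_mem_right (hK.mem_of_adj hab)),
        hH.stubParity_eq_zero (hST.notMem_of_mem_right (hK.mem_of_adj hab.symm))]
      simpa using hK.parity_ne a b hab

lemma sup_edge (h : IsParityAlternating G S (σ + Pi.single v 1 + Pi.single c 1) H)
    (hv : v ∈ S) (hc : c ∈ S) (hG : G.Adj v c) (hH : ¬H.Adj v c)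
    (hne : stubParity H (σ + Pi.single v 1 + Pi.single c 1) v ≠
      stubParity H (σ + Pi.single v 1 + Pi.single c 1) c) :
    IsParityAlternating G S σ (H ⊔ edge v c) where
  le := sup_le h.le ((edge_le_iff _).2 (Or.inr hG))
  support_subset := by
    rintro a ⟨b, hab | hab⟩
    · exact h.mem_of_adj hab
    · rcases (edge_adj ..).1 hab with ⟨⟨rfl, -⟩ | ⟨rfl, -⟩, -⟩ <;> assumption
  stubs_eq_zero x hx := by
    have hxv : x ≠ v := fun e => hx (e ▸ hv)
    have hxc : x ≠ c := fun e => hx (e ▸ hc)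
    simpa [hxv, hxc] using h.stubs_eq_zero x hx
  parity_ne a b hab := by
    rw [stubParity_sup_edge hG.ne hH]
    rcases hab with hab | hab
    · exact h.parity_ne a b hab
    · rcases (edge_adj ..).1 hab with ⟨⟨rfl, rfl⟩ | ⟨rfl, rfl⟩, -⟩
      exacts [hne, hne.symm]

lemma odd_degree_add_degree (h : IsParityAlternating G S 0 H) {a b : V} (hab : H.Adj a b) :
    Odd (H.degree a + H.degree b) := by
  have hne := h.parity_ne a b hab
  simp only [stubParity, Pi.zero_apply, add_zero] at hne
  rw [← ZMod.natCast_eq_one_iff_odd, Nat.cast_add]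
  generalize (H.degree a : ZMod 2) = x at *
  generalize (H.degree b : ZMod 2) = y at *
  revert x y
  decide

end IsParityAlternating

end Parity

section Deficit

variable [Fintype V] {S T : Set V} {v c : V} {t q : ZMod 2} {d d₁ d₂ : ℤ}

/-- Some parity-alternating subgraph `H` of `G` inside `S`, without stubs, satisfies
`|S| - 2 |E(H)| ≤ d`. -/
def DeficitLE (G : SimpleGraph V) (S : Set V) (d : ℤ) : Prop :=
  ∃ H, IsParityAlternating G S 0 H ∧ (S.ncard : ℤ) ≤ 2 * H.edgeSet.ncard + d

/-- Some parity-alternating subgraph `H` of `G` inside `S` satisfies `|S| - 2 |E(H)| ≤ d`, where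
modulo `2` the root `v ∈ S` carries `t` stubs and has degree `q`, stubs included. -/
def RootedDeficitLE (G : SimpleGraph V) (S : Set V) (v : V) (t q : ZMod 2) (d : ℤ) : Prop :=
  v ∈ S ∧ ∃ H, IsParityAlternating G S (Pi.single v t) H ∧
    stubParity H (Pi.single v t) v = q ∧ (S.ncard : ℤ) ≤ 2 * H.edgeSet.ncard + d

lemma DeficitLE.mono (h : DeficitLE G S d₁) (hd : d₁ ≤ d₂) : DeficitLE G S d₂ := by
  obtain ⟨H, hH, hcard⟩ := h
  exact ⟨H, hH, by lia⟩

lemma DeficitLE.empty : DeficitLE G ∅ 0 :=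
  ⟨⊥, .bot (by simp), by simp⟩

lemma DeficitLE.union (hS : DeficitLE G S d₁) (hT : DeficitLE G T d₂) (hST : Disjoint S T) :
    DeficitLE G (S ∪ T) (d₁ + d₂) := by
  obtain ⟨H, hH, hHcard⟩ := hS
  obtain ⟨K, hK, hKcard⟩ := hT
  refine ⟨H ⊔ K, by simpa using hH.sup hK hST, ?_⟩
  rw [edgeSet_sup, Set.ncard_union_eq (disjoint_edgeSet.2 (hH.disjoint hK hST)),
    Set.ncard_union_eq hST]
  push_cast
  lia

lemma DeficitLE.of_even (h : DeficitLE G S 1) (hS : Even S.ncard) : DeficitLE G S 0 := by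
  obtain ⟨H, hH, hcard⟩ := h
  obtain ⟨k, hk⟩ := hS
  exact ⟨H, hH, by lia⟩

namespace RootedDeficitLE

lemma singleton : RootedDeficitLE G {v} v t t 1 :=
  ⟨rfl, ⊥, .bot (by simp +contextual), by simp [stubParity], by simp⟩

lemma deficitLE (h : RootedDeficitLE G S v 0 q d) : DeficitLE G S d := by
  obtain ⟨-, H, hH, -, hcard⟩ := h
  exact ⟨H, by simpa using hH, hcard⟩

lemma union (hS : RootedDeficitLE G S v t q d₁) (hT : DeficitLE G T d₂) (hST : Disjoint S T) :
    RootedDeficitLE G (S ∪ T) v t q (d₁ + d₂) := by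
  obtain ⟨hv, H, hH, hq, hHcard⟩ := hS
  obtain ⟨K, hK, hKcard⟩ := hT
  have hdisj := hH.disjoint hK hST
  refine ⟨Or.inl hv, H ⊔ K, by simpa using hH.sup hK hST, ?_, ?_⟩
  · rw [← add_zero (Pi.single v t : V → ZMod 2), stubParity_sup hdisj, Pi.add_apply, hq,
      hK.stubParity_eq_zero (hST.notMem_of_mem_left hv), add_zero]
  · rw [edgeSet_sup, Set.ncard_union_eq (disjoint_edgeSet.2 hdisj), Set.ncard_union_eq hST]
    push_cast
    lia

/-- The two stubs at `v` and `c` are merged into the edge `vc`. -/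
lemma join (hS : RootedDeficitLE G S v (t + 1) q d₁) (hT : RootedDeficitLE G T c 1 (q + 1) d₂)
    (hST : Disjoint S T) (hvc : G.Adj v c) (hd : d₁ + d₂ ≤ d + 2 := by norm_num) :
    RootedDeficitLE G (S ∪ T) v t q d := by
  obtain ⟨hv, H, hH, hqH, hHcard⟩ := hS
  obtain ⟨hc, K, hK, hqK, hKcard⟩ := hT
  have hvT := hST.notMem_of_mem_left hv
  have hcS := hST.notMem_of_mem_right hc
  have hdisj := hH.disjoint hK hST
  have hsup := hH.sup hK hST
  have hparity := stubParity_sup (σ := Pi.single v (t + 1)) (τ := Pi.single c 1) hdisj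
  have hv_parity : stubParity H (Pi.single v (t + 1)) v + stubParity K (Pi.single c 1) v = q := by
    rw [hqH, hK.stubParity_eq_zero hvT, add_zero]
  have hc_parity :
      stubParity H (Pi.single v (t + 1)) c + stubParity K (Pi.single c 1) c = q + 1 := by
    rw [hqK, hH.stubParity_eq_zero hcS, zero_add]
  have hnadj : ¬(H ⊔ K).Adj v c := by
    rintro (h | h)
    exacts [hcS (hH.mem_of_adj h.symm), hvT (hK.mem_of_adj h)]
  rw [Pi.single_add] at hsup hparity hv_parity hc_parity
  refine ⟨Or.inl hv, (H ⊔ K) ⊔ edge v c, hsup.sup_edge (Or.inl hv) (Or.inr hc) hvc hnadj ?_, ?_, ?_⟩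
  · rw [hparity, Pi.add_apply, Pi.add_apply, hv_parity, hc_parity]
    simp
  · rw [stubParity_sup_edge hvc.ne hnadj, hparity, Pi.add_apply, hv_parity]
  · rw [edgeSet_sup, edgeSet_edge_of_ne hvc.ne, Set.union_singleton,
      Set.ncard_insert_of_notMem (by exact hnadj), edgeSet_sup,
      Set.ncard_union_eq (disjoint_edgeSet.2 hdisj), Set.ncard_union_eq hST]
    push_cast
    lia

end RootedDeficitLE

lemma DeficitLE.singleton : DeficitLE G {v} 1 :=
  (RootedDeficitLE.singleton (t := 0)).deficitLE

/-- The invariant of the recursion on a connected set `S` with root `v`: one of three profiles of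
deficits, each good enough to determine the profile after `v` is joined to further branches. -/
def RootTrichotomy (G : SimpleGraph V) (S : Set V) (v : V) : Prop :=
  DeficitLE G S 0 ∨
    (DeficitLE G S 1 ∧ RootedDeficitLE G S v 1 1 1) ∨
    (DeficitLE G S 2 ∧ RootedDeficitLE G S v 1 0 0)

namespace RootTrichotomy

lemma deficitLE (h : RootTrichotomy G S v) : DeficitLE G S 2 := by
  rcases h with h | ⟨h, -⟩ | ⟨h, -⟩
  exacts [h.mono (by norm_num), h.mono (by norm_num), h]

lemma singleton : RootTrichotomy G {v} v :=
  .inr (.inl ⟨DeficitLE.singleton, .singleton⟩)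

lemma union (hS : RootTrichotomy G S v) (hT : DeficitLE G T 0) (hST : Disjoint S T) :
    RootTrichotomy G (S ∪ T) v := by
  rcases hS with h | ⟨h, h'⟩ | ⟨h, h'⟩
  · exact .inl (h.union hT hST)
  · exact .inr (.inl ⟨h.union hT hST, h'.union hT hST⟩)
  · exact .inr (.inr ⟨h.union hT hST, h'.union hT hST⟩)

variable {K L : Set V} {c' : V}

lemma singleton_union (hK : RootTrichotomy G K c) (hvK : v ∉ K) (hvc : G.Adj v c) :
    RootTrichotomy G ({v} ∪ K) v := by
  have hdisj : Disjoint {v} K := Set.disjoint_singleton_left.2 hvK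
  rcases hK with hK | ⟨hK, hcK⟩ | ⟨-, hcK⟩
  · exact singleton.union hK hdisj
  · have hplain : DeficitLE G ({v} ∪ K) (1 + 1) := DeficitLE.singleton.union hK hdisj
    exact .inr (.inr ⟨hplain, RootedDeficitLE.singleton.join hcK hdisj hvc⟩)
  · have hjoin : RootedDeficitLE G ({v} ∪ K) v 0 1 0 :=
      (RootedDeficitLE.singleton (t := 1)).join hcK hdisj hvc
    exact .inl hjoin.deficitLE

lemma singleton_union_union (hK : RootTrichotomy G K c) (hL : RootTrichotomy G L c') (hvK : v ∉ K)
    (hvL : v ∉ L) (hKL : Disjoint K L) (hvc : G.Adj v c) (hvc' : G.Adj v c') :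
    RootTrichotomy G ({v} ∪ K ∪ L) v := by
  have hdK : Disjoint {v} K := Set.disjoint_singleton_left.2 hvK
  have hdL : Disjoint {v} L := Set.disjoint_singleton_left.2 hvL
  have hdvKL : Disjoint ({v} ∪ K) L := hdL.union_left hKL
  have hdvLK : Disjoint ({v} ∪ L) K := hdK.union_left hKL.symm
  have hswap : {v} ∪ K ∪ L = {v} ∪ L ∪ K := Set.union_right_comm _ _ _
  rcases hK with hK0 | ⟨hK1, hcK⟩ | ⟨hK2, hcK⟩
  · rw [hswap]
    exact (hL.singleton_union hvL hvc').union hK0 hdvLK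
  all_goals rcases hL with hL0 | ⟨hL1, hcL⟩ | ⟨hL2, hcL⟩
  · exact (singleton_union (.inr (.inl ⟨hK1, hcK⟩)) hvK hvc).union hL0 hdvKL
  · have hvK : RootedDeficitLE G ({v} ∪ K) v 1 0 0 := RootedDeficitLE.singleton.join hcK hdK hvc
    have hvKL : RootedDeficitLE G ({v} ∪ K ∪ L) v 0 0 0 := hvK.join hcL hdvKL hvc'
    exact .inl hvKL.deficitLE
  · have hvK : RootedDeficitLE G ({v} ∪ K) v 1 1 2 := RootedDeficitLE.singleton.union hK1 hdK
    have hvKL : RootedDeficitLE G ({v} ∪ K ∪ L) v 0 1 0 := hvK.join hcL hdvKL hvc'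
    exact .inl hvKL.deficitLE
  · exact (singleton_union (.inr (.inr ⟨hK2, hcK⟩)) hvK hvc).union hL0 hdvKL
  · have hvL : RootedDeficitLE G ({v} ∪ L) v 1 1 2 := RootedDeficitLE.singleton.union hL1 hdL
    have hvLK : RootedDeficitLE G ({v} ∪ L ∪ K) v 0 1 0 := hvL.join hcK hdvLK hvc
    exact .inl (hswap ▸ hvLK.deficitLE)
  · have hvK : RootedDeficitLE G ({v} ∪ K) v 0 1 (-1) := RootedDeficitLE.singleton.join hcK hdK hvc
    exact .inr (.inl ⟨(hvK.union hL2 hdvKL).deficitLE, hvK.join hcL hdvKL hvc'⟩)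

end RootTrichotomy

end Deficit

section Connected

variable {S T A : Set V} {c v : V}

lemma exists_adj_mem_sdiff_of_connected (hS : (G.induce S).Connected) (hTS : T ⊆ S)
    (hT : T.Nonempty) (hne : T ≠ S) : ∃ u ∈ T, ∃ w ∈ S \ T, G.Adj u w := by
  obtain ⟨u, hu⟩ := hT
  obtain ⟨w, hwS, hwT⟩ := Set.exists_of_ssubset (hTS.ssubset_of_ne hne)
  obtain ⟨walk⟩ := hS.preconnected ⟨u, hTS hu⟩ ⟨w, hwS⟩
  obtain ⟨⟨⟨x, y⟩, hxy⟩, -, hx, hy⟩ := walk.exists_boundary_dart (Subtype.val ⁻¹' T) hu hwT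
  exact ⟨x, hx, y, ⟨y.2, hy⟩, hxy⟩

lemma exists_connected_subset_forall_not_adj (hc : c ∈ A) :
    ∃ K ⊆ A, c ∈ K ∧ (G.induce K).Connected ∧ ∀ u ∈ K, ∀ w ∈ A \ K, ¬G.Adj u w := by
  let F : Set (Set V) := {K | K ⊆ A ∧ c ∈ K ∧ (G.induce K).Connected}
  have hcF : {c} ∈ F := ⟨by simpa using hc, rfl, by simp⟩
  have hF : (G.induce (⋃₀ F)).Connected :=
    induce_sUnion_connected_of_pairwise_not_disjoint ⟨_, hcF⟩
      (fun hK hL => ⟨c, hK.2.1, hL.2.1⟩) (fun hK => hK.2.2)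
  have hsub : ⋃₀ F ⊆ A := Set.sUnion_subset fun K hK => hK.1
  have hmem : c ∈ ⋃₀ F := ⟨{c}, hcF, rfl⟩
  refine ⟨⋃₀ F, hsub, hmem, hF, fun u hu w hw huw => hw.2 ?_⟩
  refine ⟨⋃₀ F ∪ {w}, ⟨Set.union_subset hsub (by simpa using hw.1), Or.inl hmem, ?_⟩, Or.inr rfl⟩
  exact connected_induce_union hF.preconnected (by simp) hu rfl huw

/-- Removing `v` splits `S` into branches; splitting off only one of them leaves `S` connected. -/
lemma exists_branch (hS : (G.induce S).Connected) (hv : v ∈ S) (hne : {v} ≠ S) :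
    ∃ c K, G.Adj v c ∧ c ∈ K ∧ K ⊆ S ∧ v ∉ K ∧ (G.induce K).Connected ∧
      (G.induce (S \ K)).Connected := by
  obtain ⟨c, hc, hvc⟩ : ∃ c ∈ S \ {v}, G.Adj v c := by
    simpa only [Set.mem_singleton_iff, exists_eq_left] using
      exists_adj_mem_sdiff_of_connected hS (Set.singleton_subset_iff.2 hv) ⟨v, rfl⟩ hne
  obtain ⟨K, hKS, hcK, hK, hKclosed⟩ := exists_connected_subset_forall_not_adj (G := G) hc
  have hvK : v ∉ K := fun h => (hKS h).2 rfl
  obtain ⟨L, hLS, hvL, hL, hLclosed⟩ :=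
    exists_connected_subset_forall_not_adj (G := G) (A := S \ K) ⟨hv, hvK⟩
  have hKL : K ∪ L = S := by
    by_contra hKL
    obtain ⟨u, hu, w, hw, huw⟩ := exists_adj_mem_sdiff_of_connected hS
      (Set.union_subset (hKS.trans Set.sdiff_subset) (hLS.trans Set.sdiff_subset))
      ⟨c, Or.inl hcK⟩ hKL
    simp only [Set.mem_sdiff, Set.mem_union, not_or] at hw
    rcases hu with hu | hu
    · exact hKclosed u hu w ⟨⟨hw.1, fun e => hw.2.2 (e ▸ hvL)⟩, hw.2.1⟩ huw
    · exact hLclosed u hu w ⟨⟨hw.1, hw.2.1⟩, hw.2.2⟩ huw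
  have hLeq : S \ K = L := by
    refine Set.Subset.antisymm ?_ hLS
    rw [← hKL, Set.union_sdiff_left]
    exact Set.sdiff_subset
  exact ⟨c, K, hvc, hcK, hKS.trans Set.sdiff_subset, hvK, hK, hLeq ▸ hL⟩

end Connected

section RootedConnected

variable [Fintype V] [G.LocallyFinite] {S : Set V} {v p : V}

theorem rootTrichotomy_of_connected (hdeg : ∀ x, G.degree x ≤ 3) (hS : (G.induce S).Connected)
    (hv : v ∈ S) (hp : p ∉ S) (hvp : G.Adj v p) : RootTrichotomy G S v := by
  induction S using WellFoundedLT.induction generalizing v p with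
  | ind S ih =>
  by_cases hSv : {v} = S
  · exact hSv ▸ .singleton
  obtain ⟨c, K, hvc, hcK, hKS, hvK, hK, hSK⟩ := exists_branch hS hv hSv
  have hKtri : RootTrichotomy G K c :=
    ih K (hKS.ssubset_of_mem_notMem hv hvK) hK hcK hvK hvc.symm
  by_cases hSKv : {v} = S \ K
  · rw [← Set.sdiff_union_of_subset hKS, ← hSKv]
    exact hKtri.singleton_union hvK hvc
  obtain ⟨c', L, hvc', hcL, hLSK, hvL, hL, hSKL⟩ := exists_branch hSK ⟨hv, hvK⟩ hSKv
  have hLS : L ⊆ S := hLSK.trans Set.sdiff_subset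
  have hLtri : RootTrichotomy G L c' :=
    ih L (hLS.ssubset_of_mem_notMem hv hvL) hL hcL hvL hvc'.symm
  have hSKLv : {v} = (S \ K) \ L := by
    by_contra hne
    obtain ⟨c'', M, hvc'', hcM, hMS, -⟩ := exists_branch hSKL ⟨⟨hv, hvK⟩, hvL⟩ hne
    have hsub : ({p, c, c', c''} : Finset V) ⊆ G.neighborFinset v := by
      simp [Finset.insert_subset_iff, *]
    have hcard : ({p, c, c', c''} : Finset V).card = 4 := by
      grind
    have := (Finset.card_le_card hsub).trans (hdeg v)
    lia
  rw [← Set.sdiff_union_of_subset hKS, ← Set.sdiff_union_of_subset hLSK, ← hSKLv,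
    Set.union_right_comm]
  exact hKtri.singleton_union_union hLtri hvK hvL (Set.subset_sdiff.1 hLSK).2.symm hvc hvc'

end RootedConnected

section Component

variable {C : G.ConnectedComponent} {a b c x u : V} {D W : Set V}

/-- `a - b - c` is a path with two edges in `G` whose vertices lie in `W`. -/
def IsPathThree (G : SimpleGraph V) (W : Set V) (a b c : V) : Prop :=
  a ≠ c ∧ G.Adj b a ∧ G.Adj b c ∧ {a, b, c} ⊆ W

lemma exists_isPathThree [G.LocallyFinite] (hx : 3 ≤ G.degree x) (hxW : x ∈ W)
    (hW : G.neighborSet x \ {u} ⊆ W) : ∃ p q, IsPathThree G W p x q := by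
  have hcard : 1 < ((G.neighborFinset x).erase u).card := by
    have := Finset.pred_card_le_card_erase (s := G.neighborFinset x) (a := u)
    rw [card_neighborFinset_eq_degree] at this
    lia
  obtain ⟨p, hp, q, hq, hpq⟩ := Finset.one_lt_card.1 hcard
  simp only [Finset.mem_erase, mem_neighborFinset] at hp hq
  refine ⟨p, q, hpq, hp.2, hq.2, ?_⟩
  simp only [Set.insert_subset_iff, Set.singleton_subset_iff]
  exact ⟨hW ⟨hp.2, hp.1⟩, hxW, hW ⟨hq.2, hq.1⟩⟩

lemma exists_isPathThree_supp_sdiff_singleton [G.LocallyFinite] (hdeg : ∀ x, 3 ≤ G.degree x)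
    (hu : u ∈ C.supp) : ∃ a b c, IsPathThree G (C.supp \ {u}) a b c := by
  obtain ⟨x, hux⟩ := (G.degree_pos_iff_exists_adj u).1 (by have := hdeg u; lia)
  have hx : x ∈ C.supp := C.mem_supp_of_adj_mem_supp hu hux
  have hW : G.neighborSet x \ {u} ⊆ C.supp \ {u} :=
    Set.sdiff_subset_sdiff_left fun y hy => C.mem_supp_of_adj_mem_supp hx hy
  have hxW : x ∈ C.supp \ {u} := ⟨hx, hux.ne'⟩
  obtain ⟨p, q, hpq⟩ := exists_isPathThree (hdeg x) hxW hW
  exact ⟨p, x, q, hpq⟩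

/-- A vertex adjacent to `D` lies on every path outside `D`, and a vertex off the path `a - b - c`
would be the middle of another one. -/
lemma IsPathThree.supp_sdiff_eq [G.LocallyFinite] (hdeg : ∀ x, 3 ≤ G.degree x)
    (hpath : IsPathThree G (C.supp \ D) a b c) (hDC : D ⊆ C.supp) (hD : D.Nonempty)
    (hmeets : ∀ u ∈ D, ∀ w ∈ C.supp \ D, G.Adj u w →
      ∀ p x q, ¬IsPathThree G ((C.supp \ D) \ {w}) p x q) :
    C.supp \ D = {a, b, c} := by
  obtain ⟨hac, hba, hbc, habc⟩ := hpath
  have hmem : ∀ u ∈ D, ∀ w ∈ C.supp \ D, G.Adj u w → w ∈ ({a, b, c} : Set V) := by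
    intro u hu w hw huw
    by_contra hwabc
    exact hmeets u hu w hw huw a b c ⟨hac, hba, hbc, Set.subset_sdiff_singleton habc hwabc⟩
  have hDne : D ≠ C.supp := by
    rintro rfl
    exact (habc (Or.inl rfl)).2 (habc (Or.inl rfl)).1
  obtain ⟨u, hu, w, hw, huw⟩ :=
    exists_adj_mem_sdiff_of_connected C.connected_toSimpleGraph hDC hD hDne
  refine Set.Subset.antisymm (fun x hx => ?_) habc
  by_contra hxabc
  have hxW : x ∈ (C.supp \ D) \ {w} := ⟨hx, fun e => hxabc (e ▸ hmem u hu w hw huw)⟩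
  have hW : G.neighborSet x \ {w} ⊆ (C.supp \ D) \ {w} :=
    Set.sdiff_subset_sdiff_left fun y hy => ⟨C.mem_supp_of_adj_mem_supp hx.1 hy,
      fun hyD => hxabc (hmem y hyD x hx hy.symm)⟩
  obtain ⟨p, q, hpq⟩ := exists_isPathThree (hdeg x) hxW hW
  exact hmeets u hu w hw huw p x q hpq

theorem exists_isPathThree_connected_sdiff [Finite V] [G.LocallyFinite]
    (hdeg : ∀ x, 3 ≤ G.degree x) (C : G.ConnectedComponent) :
    ∃ a b c, IsPathThree G C.supp a b c ∧ (G.induce (C.supp \ {a, b, c})).Connected := by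
  -- A maximal connected set whose complement contains a path is the complement of that path.
  let F : Set (Set V) :=
    {D | D ⊆ C.supp ∧ (G.induce D).Connected ∧ ∃ a b c, IsPathThree G (C.supp \ D) a b c}
  have hF : F.Nonempty := by
    obtain ⟨u, hu⟩ := C.nonempty_supp
    exact ⟨{u}, by simpa using hu, by simp, exists_isPathThree_supp_sdiff_singleton hdeg hu⟩
  obtain ⟨D, ⟨hDC, hD, a, b, c, hpath⟩, hmax⟩ := F.toFinite.exists_maximal hF
  have hrest : C.supp \ D = {a, b, c} := by
    refine hpath.supp_sdiff_eq hdeg hDC (Set.nonempty_coe_sort.1 hD.nonempty) ?_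
    intro u hu w hw huw p x q hpq
    rw [Set.sdiff_sdiff] at hpq
    have hDw : D ∪ {w} ∈ F := ⟨Set.union_subset hDC (by simpa using hw.1),
      connected_induce_union hD.preconnected (by simp) hu rfl huw, p, x, q, hpq⟩
    exact hw.2 (hmax hDw Set.subset_union_left (Or.inr rfl))
  obtain ⟨hac, hba, hbc, habc⟩ := hpath
  refine ⟨a, b, c, ⟨hac, hba, hbc, habc.trans Set.sdiff_subset⟩, ?_⟩
  rwa [← hrest, Set.sdiff_sdiff_cancel_left hDC]

theorem even_ncard_supp [Finite V] [G.LocallyFinite] (hdeg : ∀ x, Odd (G.degree x))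
    (C : G.ConnectedComponent) : Even C.supp.ncard := by
  have := Fintype.ofFinite V
  have hodd (x : C.supp) : Odd ((G.induce C.supp).degree x) := by
    rw [degree_induce_of_neighborSet_subset fun y hy => C.mem_supp_of_adj_mem_supp x.2 hy]
    convert hdeg x
  have heven := (G.induce C.supp).even_card_odd_degree_vertices
  rwa [Finset.filter_true_of_mem fun x _ => hodd x, Finset.card_univ, ← Set.toFinset_card,
    ← Set.ncard_eq_toFinset_card'] at heven

variable [Fintype V]

lemma IsPathThree.deficitLE (h : IsPathThree G W a b c) : DeficitLE G {a, b, c} (-1) := by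
  obtain ⟨hac, hba, hbc, -⟩ := h
  have hab : RootedDeficitLE G ({b} ∪ {a}) b 1 0 0 :=
    RootedDeficitLE.singleton.join .singleton (by simp [hba.ne]) hba
  have habc : RootedDeficitLE G ({b} ∪ {a} ∪ {c}) b 0 0 (-1) :=
    hab.join .singleton (by simp [hac.symm, hbc.ne']) hbc
  have hset : ({a, b, c} : Set V) = {b} ∪ {a} ∪ {c} := by
    grind
  exact hset ▸ habc.deficitLE

theorem deficitLE_supp [G.LocallyFinite] (hG : G.IsRegularOfDegree 3) (C : G.ConnectedComponent) :
    DeficitLE G C.supp 0 := by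
  obtain ⟨a, b, c, hpath, hconn⟩ := exists_isPathThree_connected_sdiff (fun x => (hG x).ge) C
  have hsub : {a, b, c} ⊆ C.supp := hpath.2.2.2
  obtain ⟨v, hv, p, hp, hvp⟩ := exists_adj_mem_sdiff_of_connected C.connected_toSimpleGraph
    Set.sdiff_subset (Set.nonempty_coe_sort.1 hconn.nonempty)
    (fun h => (h.symm ▸ hsub (Or.inl rfl) : a ∈ C.supp \ {a, b, c}).2 (Or.inl rfl))
  have hrest : DeficitLE G (C.supp \ {a, b, c}) 2 :=
    (rootTrichotomy_of_connected (fun x => (hG x).le) hconn hv hp.2 hvp).deficitLE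
  have hsupp : DeficitLE G C.supp 1 :=
    Set.sdiff_union_of_subset hsub ▸ hrest.union hpath.deficitLE Set.disjoint_sdiff_left
  exact hsupp.of_even (even_ncard_supp (fun x => by rw [hG x]; decide) C)

theorem deficitLE_univ (h : ∀ C : G.ConnectedComponent, DeficitLE G C.supp 0) :
    DeficitLE G Set.univ 0 := by
  have hunion (s : Finset G.ConnectedComponent) : DeficitLE G (⋃ C ∈ s, C.supp) 0 := by
    induction s using Finset.induction with
    | empty => simpa using DeficitLE.empty
    | insert C s hC ih =>
      rw [Finset.set_biUnion_insert]
      refine (h C).union ih (Set.disjoint_iUnion₂_right.2 fun C' hC' => ?_)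
      exact pairwise_disjoint_supp_connectedComponent G fun e => hC (e ▸ hC')
  simpa [iUnion_connectedComponentSupp] using hunion Finset.univ

end Component

end OddLineGraph

open OddLineGraph in
/-- If `G` is a cubic graph of order `n`, then `f_o(L(G)) ≥ n / 2`. -/
theorem fo_lineGraph_cubic {V : Type*} [Fintype V] (G : SimpleGraph V)
    [DecidableRel G.Adj] (hcubic : ∀ v, G.degree v = 3) :
    Fintype.card V ≤ 2 * fo G.lineGraph := by
  obtain ⟨H, hH, hcard⟩ := deficitLE_univ (deficitLE_supp hcubic)
  have hfo : H.edgeSet.ncard ≤ fo G.lineGraph :=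
    ncard_edgeSet_le_fo_lineGraph hH.le fun _ _ => hH.odd_degree_add_degree
  rw [Set.ncard_univ, Nat.card_eq_fintype_card] at hcard
  lia
end

section
/- Let n be a positive even integer and let G_n = L(K_n) be the line graph of the complete graph K_n. Then f_o(G_n) = n(n-2)/4. -/
/-!
An induced subgraph of `L(G)` is the line graph of a subgraph `H ≤ G`, and the edge `uv` has degree
`d(u) + d(v) - 2` in `L(H)`. So `f_o(L(G))` is the maximum number of edges of a subgraph `H ≤ G` in
which every edge joins a vertex of odd degree to a vertex of even degree.

Let `a` and `b` be the numbers of vertices of odd and even degree in such an `H` on `n` vertices.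
The number of edges is at most `a * b`, which suffices for `n` odd. For `n` even, `a` and `b` have
the same parity: if both are even, an odd degree is at most `b - 1`, and if both are odd, an even
degree is at most `a - 1`. So the number of edges is at most a product of two integers with sum
`2 * m + 1`, where `m = (n - 1) / 2`, hence at most `m * (m + 1)`. The graph `K_{m, m + 1}`, with an
isolated vertex added if `n` is even, attains this bound.
-/

open scoped Classical

open Finset SimpleGraph

section Embedding

variable {V W : Type*} [Fintype V] {G : SimpleGraph V} {G' : SimpleGraph W}

lemma card_filter_adj_map_univ (φ : G ↪g G') (v : V) :
    #{w ∈ univ.map φ.toEmbedding | G'.Adj (φ v) w} = G.degree v := by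
  rw [filter_map, card_map, ← card_neighborFinset_eq_degree, neighborFinset_eq_filter]
  congr 1
  exact filter_congr fun _ _ => φ.map_adj_iff

end Embedding

section LineGraph

variable {V : Type*} [Fintype V] {G H : SimpleGraph V}

lemma degree_lineGraph_add_two_s10 {u v : V} (h : G.Adj u v) :
    G.lineGraph.degree ⟨s(u, v), h⟩ + 2 = G.degree u + G.degree v := by
  have neighbors_eq : (G.lineGraph.neighborFinset ⟨s(u, v), h⟩).map (.subtype _) =
      (G.incidenceFinset u ∪ G.incidenceFinset v).erase s(u, v) := by
    ext e
    simp only [mem_map, mem_neighborFinset, lineGraph_adj_iff_exists, ne_eq, Sym2.mem_iff,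
      exists_eq_or_imp, ↓existsAndEq, true_and, Function.Embedding.subtype_apply, Subtype.exists,
      exists_and_right, exists_eq_right, mem_erase, mem_union, mem_incidenceFinset, incidenceSet,
      Set.mem_ofPred_eq]
    grind
  have inter_eq : G.incidenceFinset u ∩ G.incidenceFinset v = {s(u, v)} := by
    simpa [← coe_inj] using G.incidenceSet_inter_incidenceSet_of_adj h
  have mem_union : s(u, v) ∈ G.incidenceFinset u ∪ G.incidenceFinset v := by
    simp [incidenceSet, h]
  rw [← card_neighborFinset_eq_degree, ← card_map, neighbors_eq, ← card_incidenceFinset_eq_degree,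
    ← card_incidenceFinset_eq_degree, ← card_union_add_card_inter, inter_eq, card_singleton,
    ← card_erase_add_one mem_union]

/-- The embedding of `L(H)` into `L(G)` induced by `H ≤ G`. -/
def lineGraphEmbedding (h : H ≤ G) : H.lineGraph ↪g G.lineGraph where
  toEmbedding := Set.embeddingOfSubset _ _ (edgeSet_mono h)
  map_rel_iff' := by simp [lineGraph_adj_iff_exists, Subtype.ext_iff]

lemma exists_map_lineGraphEmbedding_eq (s : Finset G.edgeSet) :
    ∃ (H : SimpleGraph V) (h : H ≤ G), univ.map (lineGraphEmbedding h).toEmbedding = s := by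
  obtain ⟨H, edgeSet_eq⟩ : ∃ H : SimpleGraph V, H.edgeSet = (↑) '' (s : Set G.edgeSet) := by
    refine ⟨fromEdgeSet ((↑) '' (s : Set G.edgeSet)), ?_⟩
    rw [edgeSet_fromEdgeSet, sdiff_eq_left, Set.disjoint_left]
    rintro _ ⟨e, -, rfl⟩
    exact edgeSet_subset_compl_diagSet G e.2
  have hle : H ≤ G := by
    rw [← edgeSet_subset_edgeSet, edgeSet_eq]
    exact Subtype.coe_image_subset _ _
  refine ⟨H, hle, ?_⟩
  ext e
  have mem_edgeSet_iff : (e : Sym2 V) ∈ H.edgeSet ↔ e ∈ s := by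
    rw [edgeSet_eq, Subtype.val_injective.mem_set_image, mem_coe]
  rw [← mem_edgeSet_iff, mem_map]
  exact ⟨by rintro ⟨f, -, rfl⟩; exact f.2, fun he => ⟨⟨e, he⟩, mem_univ _, rfl⟩⟩

/-- Every edge of `H` joins a vertex of odd degree to a vertex of even degree. For `H ≤ G` this says
that the edges of `H` span an odd induced subgraph of `L(G)`. -/
def HasOddEdgeDegreeSums (H : SimpleGraph V) : Prop :=
  ∀ ⦃u v⦄, H.Adj u v → Odd (H.degree u + H.degree v)

lemma hasOddEdgeDegreeSums_iff_odd_degree_lineGraph :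
    HasOddEdgeDegreeSums H ↔ ∀ e, Odd (H.lineGraph.degree e) := by
  have odd_iff {u v : V} (h : H.Adj u v) :
      Odd (H.lineGraph.degree ⟨s(u, v), h⟩) ↔ Odd (H.degree u + H.degree v) := by
    rw [← degree_lineGraph_add_two_s10 h, Nat.odd_add, iff_true_right even_two]
  constructor
  · rintro hH ⟨⟨u, v⟩, h⟩
    exact (odd_iff h).2 (hH h)
  · exact fun hH u v h => (odd_iff h).1 (hH _)

lemma fo_lineGraph [Fintype G.edgeSet] :
    fo G.lineGraph = sSup {m | ∃ H ≤ G, HasOddEdgeDegreeSums H ∧ #H.edgeFinset = m} := by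
  have odd_iff {H : SimpleGraph V} (h : H ≤ G) :
      (∀ e ∈ univ.map (lineGraphEmbedding h).toEmbedding,
        Odd #{f ∈ univ.map (lineGraphEmbedding h).toEmbedding | G.lineGraph.Adj e f}) ↔
      HasOddEdgeDegreeSums H := by
    rw [hasOddEdgeDegreeSums_iff_odd_degree_lineGraph, forall_mem_map]
    simp [← card_filter_adj_map_univ (lineGraphEmbedding h)]
  have card_eq {H : SimpleGraph V} (h : H ≤ G) :
      #(univ.map (lineGraphEmbedding h).toEmbedding) = #H.edgeFinset := by
    rw [card_map, card_univ, edgeFinset_card]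
  unfold fo
  congr 1
  ext m
  constructor
  · rintro ⟨s, hs, rfl⟩
    obtain ⟨H, h, rfl⟩ := exists_map_lineGraphEmbedding_eq s
    exact ⟨H, h, (odd_iff h).1 hs, (card_eq h).symm⟩
  · rintro ⟨H, h, hH, rfl⟩
    exact ⟨_, (odd_iff h).2 hH, card_eq h⟩

end LineGraph

section Bipartite

variable {V : Type*} [Fintype V] {H : SimpleGraph V} {A B : Finset V}

lemma card_edgeFinset_le_of_degree_le (h : H.IsBipartiteWith A B) {d : ℕ}
    (hd : ∀ v ∈ A, H.degree v ≤ d) : #H.edgeFinset ≤ #A * d := by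
  rw [← isBipartiteWith_sum_degrees_eq_card_edges h]
  exact sum_le_card_nsmul A _ d hd

lemma card_edgeFinset_le_of_degree_ne_card (h : H.IsBipartiteWith A B)
    (hne : ∀ v ∈ A, H.degree v ≠ #B) : #H.edgeFinset ≤ #A * (#B - 1) :=
  card_edgeFinset_le_of_degree_le h fun v hv =>
    Nat.le_sub_one_of_lt ((isBipartiteWith_degree_le h hv).lt_of_ne (hne v hv))

lemma HasOddEdgeDegreeSums.isBipartiteWith (hH : HasOddEdgeDegreeSums H) :
    H.IsBipartiteWith ({v | Odd (H.degree v)} : Finset V) ({v | Even (H.degree v)} : Finset V) where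
  disjoint := by
    simp [Set.disjoint_left]
  mem_of_adj u v huv := by
    have odd_sum := hH huv
    simp only [coe_filter, mem_univ, true_and, Set.mem_ofPred_eq]
    grind

lemma degree_eq_card_of_isCompleteBetween (h : H.IsBipartiteWith A B)
    (hc : H.IsCompleteBetween A B) {v : V} (hv : v ∈ A) : H.degree v = #B := by
  rw [← card_neighborFinset_eq_degree, isBipartiteWith_neighborFinset h hv,
    filter_true_of_mem fun w hw => hc hv hw]

lemma card_edgeFinset_eq_of_isCompleteBetween (h : H.IsBipartiteWith A B)
    (hc : H.IsCompleteBetween A B) : #H.edgeFinset = #A * #B := by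
  rw [← isBipartiteWith_sum_degrees_eq_card_edges h,
    sum_const_nat fun v hv => degree_eq_card_of_isCompleteBetween h hc hv]

lemma hasOddEdgeDegreeSums_of_isCompleteBetween (h : H.IsBipartiteWith A B)
    (hc : H.IsCompleteBetween A B) (hodd : Odd (#A + #B)) : HasOddEdgeDegreeSums H := by
  have degree_left {v : V} (hv : v ∈ A) : H.degree v = #B :=
    degree_eq_card_of_isCompleteBetween h hc hv
  have degree_right {v : V} (hv : v ∈ B) : H.degree v = #A :=
    degree_eq_card_of_isCompleteBetween h.symm hc.symm hv
  intro u v huv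
  rcases h.mem_of_adj huv with ⟨hu, hv⟩ | ⟨hu, hv⟩
  · rwa [degree_left hu, degree_right hv, add_comm]
  · rwa [degree_right hu, degree_left hv]

end Bipartite

lemma mul_le_mul_succ_of_add_le {x y m : ℕ} (h : x + y ≤ 2 * m + 1) : x * y ≤ m * (m + 1) := by
  have : 4 * (x * y) ≤ 4 * (m * (m + 1)) + 1 :=
    calc 4 * (x * y) = 4 * x * y := by ring
      _ ≤ (x + y) ^ 2 := four_mul_le_sq_add x y
      _ ≤ (2 * m + 1) ^ 2 := Nat.pow_le_pow_left h 2
      _ = 4 * (m * (m + 1)) + 1 := by ring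
  lia

section Extremal

variable {V : Type*} [Fintype V]

lemma HasOddEdgeDegreeSums.card_edgeFinset_le {H : SimpleGraph V} (hH : HasOddEdgeDegreeSums H) :
    #H.edgeFinset ≤ (Fintype.card V - 1) / 2 * ((Fintype.card V - 1) / 2 + 1) := by
  set A : Finset V := {v | Odd (H.degree v)} with hA
  set B : Finset V := {v | Even (H.degree v)} with hB
  have hAB : H.IsBipartiteWith A B := hH.isBipartiteWith
  have hcard : #A + #B = Fintype.card V := by
    simpa [hA, hB] using card_filter_add_card_filter_not (s := univ) fun v => Odd (H.degree v)
  have odd_degree {v : V} (hv : v ∈ A) : Odd (H.degree v) := (mem_filter.1 hv).2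
  have even_degree {v : V} (hv : v ∈ B) : Even (H.degree v) := (mem_filter.1 hv).2
  rcases Nat.even_or_odd (Fintype.card V) with hn | hn
  · rcases Nat.even_or_odd #B with hb | hb
    · refine (card_edgeFinset_le_of_degree_ne_card hAB fun v hv heq => ?_).trans ?_
      · exact Nat.not_even_iff_odd.2 (odd_degree hv) (heq ▸ hb)
      · obtain hb0 | hb0 := (#B).eq_zero_or_pos
        · simp [hb0]
        · exact mul_le_mul_succ_of_add_le (by grind)
    · have ha : Odd #A := by grind
      refine (card_edgeFinset_le_of_degree_ne_card hAB.symm fun v hv heq => ?_).trans ?_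
      · exact Nat.not_even_iff_odd.2 ha (heq ▸ even_degree hv)
      · exact mul_le_mul_succ_of_add_le (by grind)
  · refine (card_edgeFinset_le_of_degree_le hAB fun _ => isBipartiteWith_degree_le hAB).trans ?_
    exact mul_le_mul_succ_of_add_le (by grind)

lemma exists_hasOddEdgeDegreeSums_card_edgeFinset_eq {m : ℕ} (hm : 2 * m + 1 ≤ Fintype.card V) :
    ∃ H : SimpleGraph V, HasOddEdgeDegreeSums H ∧ #H.edgeFinset = m * (m + 1) := by
  obtain ⟨A, -, hA⟩ : ∃ A ⊆ (univ : Finset V), #A = m :=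
    exists_subset_card_eq (by rw [card_univ]; lia)
  obtain ⟨B, hBA, hB⟩ : ∃ B ⊆ Aᶜ, #B = m + 1 :=
    exists_subset_card_eq (by rw [card_compl]; lia)
  have hAB : Disjoint A B := (subset_compl_iff_disjoint_right.1 hBA).symm
  have hbip := between_isBipartiteWith (G := ⊤) (disjoint_coe.2 hAB)
  have hcomplete : ((⊤ : SimpleGraph V).between A B).IsCompleteBetween A B :=
    fun _ hv _ hw => ⟨disjoint_iff_ne.1 hAB _ hv _ hw, .inl ⟨hv, hw⟩⟩
  refine ⟨(⊤ : SimpleGraph V).between A B,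
    hasOddEdgeDegreeSums_of_isCompleteBetween hbip hcomplete ⟨m, by lia⟩, ?_⟩
  rw [card_edgeFinset_eq_of_isCompleteBetween hbip hcomplete, hA, hB]

theorem fo_lineGraph_completeGraph_general [DecidableEq V] [Nonempty V] :
    fo (SimpleGraph.lineGraph (⊤ : SimpleGraph V)) =
      (Fintype.card V - 1) / 2 * ((Fintype.card V - 1) / 2 + 1) := by
  have card_pos := Fintype.card_pos (α := V)
  obtain ⟨H, hH, hcard⟩ := exists_hasOddEdgeDegreeSums_card_edgeFinset_eq (V := V)
    (m := (Fintype.card V - 1) / 2) (by lia)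
  rw [fo_lineGraph]
  refine IsGreatest.csSup_eq ⟨⟨H, le_top, hH, hcard⟩, ?_⟩
  rintro _ ⟨H', -, hH', rfl⟩
  exact hH'.card_edgeFinset_le

end Extremal

/-- For a positive even integer `n`, the line graph of the complete graph `K_n`
satisfies `f_o(L(K_n)) = n (n - 2) / 4`. -/
theorem fo_lineGraph_completeGraph (n : ℕ) (hpos : 0 < n) (hn : Even n) :
    fo (SimpleGraph.lineGraph (⊤ : SimpleGraph (Fin n))) = n * (n - 2) / 4 := by
  have nonempty_vertices := Fin.pos_iff_nonempty.1 hpos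
  obtain ⟨m, rfl⟩ : ∃ m, n = 2 * m + 2 := ⟨n / 2 - 1, by grind⟩
  have half : (2 * m + 2 - 1) / 2 = m := by lia
  have product : (2 * m + 2) * (2 * m + 2 - 2) = 4 * (m * (m + 1)) := by
    rw [Nat.add_sub_cancel]
    ring
  rw [fo_lineGraph_completeGraph_general, Fintype.card_fin, half, product,
    Nat.mul_div_cancel_left _ four_pos]
end

section
/- Let G be a finite simple graph and let F be a set of edges of G. The subgraph of the line graph L(G) induced by the vertex set F has all degrees odd if and only if for every edge uv ∈ F, the degrees of u and v in the spanning subgraph of G with edge set F have opposite parity (one odd, one even). Consequently, f_o(L(G)) equals the maximum number of edges of a spanning subgraph of G in which every edge joins a vertex of odd degree to a vertex of even degree. -/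
/-!
An edge `uv` of `F` has degree `d(u) + d(v) - 2` in the subgraph of `L(G)` induced by `F`, where `d`
is the degree in `(V, F)`: among the edges of `F` that meet `uv`, the edge `uv` is the only one with
both `u` and `v` as ends, because `G` is simple. So this degree is odd exactly when `d(u)` and
`d(v)` have opposite parity, and the two suprema range over the same family of edge sets.
-/

open scoped Classical

open Finset

section

variable {V : Type*}

lemma card_filter_ne_and_mem_or_mem_add_two {F : Finset (Sym2 V)} {u v : V} (huv : u ≠ v)
    (hF : s(u, v) ∈ F) :
    #{f ∈ F | f ≠ s(u, v) ∧ (u ∈ f ∨ v ∈ f)} + 2 = #{f ∈ F | u ∈ f} + #{f ∈ F | v ∈ f} := by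
  have h_inter : {f ∈ F | u ∈ f} ∩ {f ∈ F | v ∈ f} = {s(u, v)} := by
    ext f
    simp only [← filter_and, mem_filter, Sym2.mem_and_mem_iff huv, mem_singleton]
    exact and_iff_right_of_imp fun hf => hf ▸ hF
  have h_union : {f ∈ F | u ∈ f} ∪ {f ∈ F | v ∈ f} =
      insert s(u, v) {f ∈ F | f ≠ s(u, v) ∧ (u ∈ f ∨ v ∈ f)} := by
    ext f
    by_cases hf : f = s(u, v) <;> simp [hf, hF, and_or_left]
  have h_notMem : s(u, v) ∉ ({f ∈ F | f ≠ s(u, v) ∧ (u ∈ f ∨ v ∈ f)} : Finset (Sym2 V)) := by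
    simp
  calc #{f ∈ F | f ≠ s(u, v) ∧ (u ∈ f ∨ v ∈ f)} + 2
      = #({f ∈ F | u ∈ f} ∪ {f ∈ F | v ∈ f}) + #({f ∈ F | u ∈ f} ∩ {f ∈ F | v ∈ f}) := by
        rw [h_union, h_inter, card_insert_of_notMem h_notMem, card_singleton]
    _ = #{f ∈ F | u ∈ f} + #{f ∈ F | v ∈ f} := card_union_add_card_inter _ _

/-- The coercion on the left elaborates to a bind in the monad `Finset`. -/
lemma coe_finset_subtype_eq_map {α : Type*} {p : α → Prop} (s : Finset (Subtype p)) :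
    (s : Finset α) = s.map (Function.Embedding.subtype p) := by
  rw [map_eq_image]
  exact sup_singleton_apply s Subtype.val

variable {G : SimpleGraph V}

lemma lineGraph_adj_iff_ne_and_mem_or_mem {e f : G.edgeSet} {u v : V}
    (he : (e : Sym2 V) = s(u, v)) :
    G.lineGraph.Adj e f ↔ (f : Sym2 V) ≠ s(u, v) ∧ (u ∈ (f : Sym2 V) ∨ v ∈ (f : Sym2 V)) := by
  rw [SimpleGraph.lineGraph_adj_iff_exists, ← he, Subtype.coe_ne_coe, ne_comm]
  simp [he, or_and_right, exists_or]

lemma card_filter_lineGraph_adj_add_two {F : Finset G.edgeSet} {e : G.edgeSet} (heF : e ∈ F)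
    {u v : V} (he : (e : Sym2 V) = s(u, v)) :
    #{f ∈ F | G.lineGraph.Adj e f} + 2 =
      #{f ∈ (F : Finset (Sym2 V)) | u ∈ f} + #{f ∈ (F : Finset (Sym2 V)) | v ∈ f} := by
  have huv : u ≠ v := (G.mem_edgeSet.1 (he ▸ e.2)).ne
  have h_mem : s(u, v) ∈ (F : Finset (Sym2 V)) := by
    rw [coe_finset_subtype_eq_map, ← he]
    exact mem_map_of_mem _ heF
  rw [← card_filter_ne_and_mem_or_mem_add_two huv h_mem, coe_finset_subtype_eq_map, filter_map,
    card_map]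
  congr! 3 with f
  exact lineGraph_adj_iff_ne_and_mem_or_mem he

lemma odd_card_filter_lineGraph_adj_iff {F : Finset G.edgeSet} {e : G.edgeSet} (heF : e ∈ F)
    {u v : V} (he : (e : Sym2 V) = s(u, v)) :
    Odd #{f ∈ F | G.lineGraph.Adj e f} ↔
      (Odd #{f ∈ (F : Finset (Sym2 V)) | u ∈ f} ↔
        Even #{f ∈ (F : Finset (Sym2 V)) | v ∈ f}) := by
  rw [← Nat.odd_add, ← card_filter_lineGraph_adj_add_two heF he, Nat.odd_add]
  exact (iff_true_right even_two).symm

lemma forall_odd_card_filter_lineGraph_adj_iff (F : Finset G.edgeSet) :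
    (∀ e ∈ F, Odd #{f ∈ F | G.lineGraph.Adj e f}) ↔
      ∀ e ∈ F, ∀ u v : V, (e : Sym2 V) = s(u, v) →
        (Odd #{f ∈ (F : Finset (Sym2 V)) | u ∈ f} ↔
          Even #{f ∈ (F : Finset (Sym2 V)) | v ∈ f}) := by
  refine forall₂_congr fun e heF => ⟨fun h u v he => ?_, fun h => ?_⟩
  · exact (odd_card_filter_lineGraph_adj_iff heF he).1 h
  · obtain ⟨⟨u, v⟩, he⟩ := Sym2.mk_surjective (e : Sym2 V)
    exact (odd_card_filter_lineGraph_adj_iff heF he.symm).2 (h u v he.symm)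

end

theorem fo_lineGraph_eq_max_odd_even_edge_subgraph_general {V : Type*} (G : SimpleGraph V) :
    (∀ F : Finset G.edgeSet,
      ((∀ e ∈ F, Odd #{f ∈ F | G.lineGraph.Adj e f}) ↔
        ∀ e ∈ F, ∀ u v : V, (e : Sym2 V) = s(u, v) →
          (Odd #{f ∈ (F : Finset (Sym2 V)) | u ∈ f} ↔
            Even #{f ∈ (F : Finset (Sym2 V)) | v ∈ f}))) ∧
    ∀ [Fintype G.edgeSet], fo G.lineGraph = sSup {m | ∃ F : Finset G.edgeSet,
      (∀ e ∈ F, ∀ u v : V, (e : Sym2 V) = s(u, v) →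
        (Odd #{f ∈ (F : Finset (Sym2 V)) | u ∈ f} ↔
          Even #{f ∈ (F : Finset (Sym2 V)) | v ∈ f})) ∧ #F = m} := by
  refine ⟨forall_odd_card_filter_lineGraph_adj_iff, ?_⟩
  intro _
  simp only [fo, forall_odd_card_filter_lineGraph_adj_iff]

/-- A set `F` of edges of `G` induces a subgraph of the line graph `L(G)` with all
degrees odd iff every edge `uv ∈ F` joins a vertex of odd degree to a vertex of even
degree in the spanning subgraph `(V, F)`. Consequently, `f_o(L(G))` is the maximum
number of edges of a spanning subgraph of `G` in which every edge joins a vertex of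
odd degree to a vertex of even degree. -/
theorem fo_lineGraph_eq_max_odd_even_edge_subgraph {V : Type*} [Fintype V]
    (G : SimpleGraph V) :
    (∀ F : Finset G.edgeSet,
      ((∀ e ∈ F, Odd ((F.filter (fun f => G.lineGraph.Adj e f)).card)) ↔
        (∀ e ∈ F, ∀ u v : V, (e : Sym2 V) = s(u, v) →
          (Odd ((F.filter (fun f => u ∈ (f : Sym2 V))).card) ↔
            Even ((F.filter (fun f => v ∈ (f : Sym2 V))).card))))) ∧
    fo G.lineGraph = sSup {m | ∃ F : Finset G.edgeSet,
      (∀ e ∈ F, ∀ u v : V, (e : Sym2 V) = s(u, v) →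
        (Odd ((F.filter (fun f => u ∈ (f : Sym2 V))).card) ↔
          Even ((F.filter (fun f => v ∈ (f : Sym2 V))).card))) ∧ F.card = m} :=
  ⟨(fo_lineGraph_eq_max_odd_even_edge_subgraph_general G).1,
    (fo_lineGraph_eq_max_odd_even_edge_subgraph_general G).2⟩
end

section
/- Let n be a positive even integer. If H is a spanning subgraph of the complete graph K_n such that every edge of H joins a vertex of odd degree in H to a vertex of even degree in H, then H has at most n(n-2)/4 edges. -/
/-!
The graph is bipartite, with parts the `a` vertices of odd degree and the `b` vertices of even
degree. By the handshaking lemma `a` is even, hence so is `b`. The degree of a vertex in the first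
part is odd and at most the even number `b`, hence at most `b - 1`, so there are at most `a (b - 1)`
edges. The factors `a` and `b - 1` have different parities, so they are distinct and the inequality
`4 a (b - 1) ≤ (a + b - 1) ^ 2` is strict, that is, `4 a (b - 1) ≤ (a + b) (a + b - 2)`.
-/

open Finset

section Arithmetic

theorem four_mul_lt_sq_add_of_ne {R : Type*} [CommSemiring R] [LinearOrder R]
    [IsStrictOrderedRing R] [ExistsAddOfLE R] {a b : R} (hab : a ≠ b) :
    4 * a * b < (a + b) ^ 2 := by
  wlog hlt : a < b generalizing a b
  · have hsymm := this hab.symm (hab.lt_or_gt.resolve_left hlt)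
    rwa [mul_right_comm, add_comm] at hsymm
  obtain ⟨c, hc, rfl⟩ := exists_pos_add_of_lt' hlt
  calc 4 * a * (a + c) < 4 * a * (a + c) + c ^ 2 := lt_add_of_pos_right _ (pow_pos hc 2)
    _ = (a + (a + c)) ^ 2 := by ring

theorem mul_sub_one_le_mul_sub_two_div_four {a b : ℕ} (hab : Even (a + b)) :
    a * (b - 1) ≤ (a + b) * (a + b - 2) / 4 := by
  obtain _ | c := b
  · simp
  have hne : a ≠ c := by grind
  rw [Nat.le_div_iff_mul_le four_pos, Nat.add_sub_cancel]
  calc a * c * 4 = 4 * a * c := by ring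
    _ ≤ (a + c) ^ 2 - 1 ^ 2 := Nat.le_sub_one_of_lt (four_mul_lt_sq_add_of_ne hne)
    _ = (a + (c + 1)) * (a + (c + 1) - 2) := Nat.sq_sub_sq (a + c) 1

end Arithmetic

section Graph

variable {V : Type*} {G : SimpleGraph V}

theorem isBipartiteWith_odd_degree_even_degree [G.LocallyFinite]
    (h : ∀ u v, G.Adj u v → (Odd (G.degree u) ↔ Even (G.degree v))) :
    G.IsBipartiteWith {v | Odd (G.degree v)} {v | Even (G.degree v)} where
  disjoint := Set.disjoint_left.2 fun _ hodd heven => Nat.not_even_iff_odd.2 hodd heven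
  mem_of_adj u v huv := by
    rcases Nat.even_or_odd (G.degree u) with hu | hu
    · exact .inr ⟨hu, (h v u huv.symm).2 hu⟩
    · exact .inl ⟨hu, (h u v huv).1 hu⟩

theorem degree_le_card_sub_one_of_isBipartiteWith {s t : Finset V} (hG : G.IsBipartiteWith s t)
    {v : V} [Fintype (G.neighborSet v)] (hv : v ∈ s) (hodd : Odd (G.degree v)) (ht : Even #t) :
    G.degree v ≤ #t - 1 := by
  have hle : G.degree v ≤ #t := SimpleGraph.isBipartiteWith_degree_le hG hv
  have hne : G.degree v ≠ #t := fun heq => Nat.not_even_iff_odd.2 hodd (heq ▸ ht)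
  exact Nat.le_sub_one_of_lt (hle.lt_of_ne hne)

variable [Fintype V] [DecidableRel G.Adj]

variable (G) in
theorem card_odd_degree_add_card_even_degree :
    #{v | Odd (G.degree v)} + #{v | Even (G.degree v)} = Fintype.card V := by
  simpa only [Nat.not_odd_iff_even, card_univ] using
    card_filter_add_card_filter_not (s := univ) fun v => Odd (G.degree v)

theorem even_card_even_degree_vertices (hV : Even (Fintype.card V)) :
    Even #{v | Even (G.degree v)} := by
  rw [← card_odd_degree_add_card_even_degree G] at hV
  exact (Nat.even_add.1 hV).1 G.even_card_odd_degree_vertices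

theorem card_edgeFinset_le_card_mul_of_isBipartiteWith {s t : Finset V} {d : ℕ}
    (hG : G.IsBipartiteWith s t) (hd : ∀ v ∈ s, G.degree v ≤ d) : #G.edgeFinset ≤ #s * d := by
  rw [← SimpleGraph.isBipartiteWith_sum_degrees_eq_card_edges hG]
  exact sum_le_card_nsmul s _ d hd

theorem card_edges_le_of_odd_even_general (hV : Even (Fintype.card V))
    (h : ∀ u v, G.Adj u v → (Odd (G.degree u) ↔ Even (G.degree v))) :
    #G.edgeFinset ≤ Fintype.card V * (Fintype.card V - 2) / 4 := by
  let A : Finset V := {v | Odd (G.degree v)}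
  let B : Finset V := {v | Even (G.degree v)}
  have hG : G.IsBipartiteWith A B := by
    simpa [A, B] using isBipartiteWith_odd_degree_even_degree h
  have hcard : #A + #B = Fintype.card V := card_odd_degree_add_card_even_degree G
  have hdeg : ∀ v ∈ A, G.degree v ≤ #B - 1 := fun v hv =>
    degree_le_card_sub_one_of_isBipartiteWith hG hv ((mem_filter_univ v).1 hv)
      (even_card_even_degree_vertices hV)
  calc #G.edgeFinset ≤ #A * (#B - 1) := card_edgeFinset_le_card_mul_of_isBipartiteWith hG hdeg
    _ ≤ (#A + #B) * (#A + #B - 2) / 4 := mul_sub_one_le_mul_sub_two_div_four (hcard ▸ hV)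
    _ = Fintype.card V * (Fintype.card V - 2) / 4 := by rw [hcard]

end Graph

/-- For a positive even integer `n`, a spanning subgraph `H` of `K_n` in which every
edge joins a vertex of odd degree to a vertex of even degree has at most
`n (n - 2) / 4` edges. -/
theorem card_edges_le_of_odd_even (n : ℕ) (hpos : 0 < n) (hn : Even n)
    (H : SimpleGraph (Fin n)) [DecidableRel H.Adj]
    (h : ∀ u v : Fin n, H.Adj u v → (Odd (H.degree u) ↔ Even (H.degree v))) :
    H.edgeFinset.card ≤ n * (n - 2) / 4 := by
  simpa only [Fintype.card_fin] using
    card_edges_le_of_odd_even_general ((Fintype.card_fin n).symm ▸ hn) h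
end
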